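/- Nonuniqueness of level-set structure (Example 4.7, radial solutions): let Ω ⊂ ℝ² be the union of the quarter-disk B(0,2) ∩ {x,y>0} with B((2,1),√5) ∩ {x≤0} and B((1,2),√5) ∩ {y≤0}, Γ = ∂Ω ∩ ({xy<0} ∪ {(0,0)}), and f = 1 for x < 0, f = 0 for x > 0 on Γ. In polar coordinates (r,θ), for every nondecreasing BV function g : [0,π/2] → [0,1], the function u(r,θ) = 0 for θ<0, g(θ) for θ∈[0,π/2], 1 for θ>π/2 satisfies the 1-Laplace conditions with the vector field z(r,θ) = (0,1) for θ<0, ê_θ (unit angular vector (−sin θ, cos θ)) for θ∈[0,π/2], (−1,0) for θ>π/2: |z| ≤ 1, div z = 0 in D'(Ω), (z,Du)=|Du| as measures, [z,ν] ∈ sign(f−u) on Γ, [z,ν]=0 on ∂Ω∖Γ. -/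

import Mathlib

open Set MeasureTheory Filter Topology Real
open scoped RealInnerProductSpace Classical

abbrev E2 := EuclideanSpace ℝ (Fin 2)

/-- `z` is divergence-free in `𝒟'(Ω)`. -/
def DivFreeOn (Ω : Set E2) (z : E2 → E2) : Prop :=
  ∀ ϕ : E2 → ℝ, ContDiff ℝ (⊤ : ℕ∞) ϕ → HasCompactSupport ϕ →
    tsupport ϕ ⊆ Ω → ∫ x in Ω, ⟪z x, gradient ϕ x⟫ = 0

/-- The divergence of a vector field on `ℝ²`. -/
noncomputable def div2 (w : E2 → E2) (x : E2) : ℝ :=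
  ∑ i : Fin 2, fderiv ℝ w x (EuclideanSpace.single i 1) i

/-- The polar angle `θ` of a planar point. -/
noncomputable def theta (p : E2) : ℝ := Complex.arg ((p 0 : ℂ) + (p 1 : ℂ) * Complex.I)

/-- Rotation of a planar vector by 90 degrees; `rot p / ‖p‖` is the unit angular
vector `ê_θ = (−sin θ, cos θ)` at `p`. -/
noncomputable def rot (d : E2) : E2 :=
  EuclideanSpace.single (0 : Fin 2) (-(d 1)) + EuclideanSpace.single (1 : Fin 2) (d 0)

noncomputable def vec (a b : ℝ) : E2 := !₂[a, b]

@[simp] lemma vec_zero (a b : ℝ) : vec a b 0 = a := by simp [vec]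
@[simp] lemma vec_one (a b : ℝ) : vec a b 1 = b := by simp [vec]

lemma vec_eta (p : E2) : vec (p 0) (p 1) = p := by
  ext i; fin_cases i <;> simp

lemma E2_ext {p q : E2} (h0 : p 0 = q 0) (h1 : p 1 = q 1) : p = q := by
  ext i; fin_cases i <;> simp [h0, h1]

lemma norm_sq_E2 (p : E2) : ‖p‖ ^ 2 = p 0 ^ 2 + p 1 ^ 2 := by
  rw [EuclideanSpace.norm_sq_eq]; simp

lemma inner_E2 (p q : E2) : ⟪p, q⟫ = p 0 * q 0 + p 1 * q 1 := by
  simp [PiLp.inner_apply]; ring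

lemma single_zero_eq (a : ℝ) : EuclideanSpace.single (0 : Fin 2) a = vec a 0 := by
  apply E2_ext <;> simp
lemma single_one_eq (a : ℝ) : EuclideanSpace.single (1 : Fin 2) a = vec 0 a := by
  apply E2_ext <;> simp

lemma rot_eq (p : E2) : rot p = vec (-(p 1)) (p 0) := by
  apply E2_ext <;> simp [rot]

lemma vec_lin (a b c d c' d' : ℝ) : vec (a * c + b * c') (a * d + b * d') =
    a • vec c d + b • vec c' d' := by
  apply E2_ext <;> simp

lemma clm_E2 {F : Type*} [NormedAddCommGroup F] [NormedSpace ℝ F] (L : E2 →L[ℝ] F) (p : E2) :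
    L p = p 0 • L (vec 1 0) + p 1 • L (vec 0 1) := by
  rw [← map_smul, ← map_smul, ← map_add]; congr 1; apply E2_ext <;> simp

lemma inner_gradient_E2 (ϕ : E2 → ℝ) (x y : E2) : ⟪y, gradient ϕ x⟫ = fderiv ℝ ϕ x y := by
  rw [inner_gradient_right]; simp

noncomputable def frame (c d c' d' : ℝ) (x : ℝ × ℝ) : E2 :=
  vec (x.1 * c + x.2 * c') (x.1 * d + x.2 * d')

lemma continuous_vec {X : Type*} [TopologicalSpace X] {f g : X → ℝ} (hf : Continuous f)
    (hg : Continuous g) : Continuous (fun x => vec (f x) (g x)) := by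
  unfold vec
  fun_prop

lemma frame_continuous (c d c' d' : ℝ) : Continuous (frame c d c' d') := by
  unfold frame
  exact continuous_vec (by fun_prop) (by fun_prop)

lemma frame_mp {c d c' d' : ℝ} (h1 : c ^ 2 + d ^ 2 = 1) (h2 : c' ^ 2 + d' ^ 2 = 1)
    (h3 : c * c' + d * d' = 0) :
    MeasurePreserving (frame c d c' d') volume volume ∧ MeasurableEmbedding (frame c d c' d') := by
  let L0 : E2 →ₗ[ℝ] E2 :=
    { toFun := fun p => vec (p 0 * c + p 1 * c') (p 0 * d + p 1 * d')
      map_add' := by intro p q; apply E2_ext <;> simp <;> ring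
      map_smul' := by intro p q; apply E2_ext <;> simp <;> ring }
  let L1 : E2 →ₗᵢ[ℝ] E2 := ⟨L0, by
    intro p
    have : ‖L0 p‖ ^ 2 = ‖p‖ ^ 2 := by
      rw [norm_sq_E2, norm_sq_E2]
      simp only [L0, LinearMap.coe_mk, AddHom.coe_mk, vec_zero, vec_one]
      linear_combination (p 0) ^ 2 * h1 + (p 1) ^ 2 * h2 + 2 * p 0 * p 1 * h3
    exact (sq_eq_sq₀ (norm_nonneg _) (norm_nonneg _)).1 this⟩
  let L : E2 ≃ₗᵢ[ℝ] E2 := L1.toLinearIsometryEquiv rfl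
  have hcomp : frame c d c' d' = L ∘ (MeasurableEquiv.toLp 2 (Fin 2 → ℝ)) ∘
      (MeasurableEquiv.finTwoArrow (α := ℝ)).symm := by
    funext x
    change _ = L0 _
    apply E2_ext <;> simp [frame, L0, MeasurableEquiv.finTwoArrow, MeasurableEquiv.toLp] <;> rfl
  rw [hcomp]
  refine ⟨?_, ?_⟩
  · refine (L.measurePreserving).comp (MeasurePreserving.comp ?_ (volume_preserving_finTwoArrow ℝ).symm)
    exact PiLp.volume_preserving_toLp (Fin 2)
  · exact (L.toHomeomorph.measurableEmbedding).comp
      ((MeasurableEquiv.measurableEmbedding _).comp (MeasurableEquiv.measurableEmbedding _))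

lemma frame_integral {c d c' d' : ℝ} (h1 : c ^ 2 + d ^ 2 = 1) (h2 : c' ^ 2 + d' ^ 2 = 1)
    (h3 : c * c' + d * d' = 0) (h : E2 → ℝ) :
    ∫ p, h p = ∫ x : ℝ × ℝ, h (frame c d c' d' x) := by
  obtain ⟨a, b⟩ := frame_mp h1 h2 h3
  exact (a.integral_comp b h).symm

lemma frame_integrable {c d c' d' : ℝ} (h1 : c ^ 2 + d ^ 2 = 1) (h2 : c' ^ 2 + d' ^ 2 = 1)
    (h3 : c * c' + d * d' = 0) {h : E2 → ℝ} (hh : Integrable h) :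
    Integrable (fun x : ℝ × ℝ => h (frame c d c' d' x)) := by
  obtain ⟨a, b⟩ := frame_mp h1 h2 h3
  exact (a.integrable_comp_emb b).2 hh

/-- derivative along a line -/
lemma line_deriv {F : E2 → ℝ} (hF : ContDiff ℝ 1 F) (q e : E2) (t : ℝ) :
    HasDerivAt (fun t : ℝ => F (q + t • e)) (fderiv ℝ F (q + t • e) e) t := by
  have h := (hF.differentiable (by norm_num) (q + t • e)).hasFDerivAt
  have h2 : HasDerivAt (fun t : ℝ => q + t • e) e t := by
    simpa using ((hasDerivAt_id t).smul_const e).const_add q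
  exact h.comp_hasDerivAt t h2

lemma line_contDiff {F : E2 → ℝ} (hF : ContDiff ℝ 1 F) (q e : E2) :
    ContDiff ℝ 1 (fun t : ℝ => F (q + t • e)) := by
  apply hF.comp; fun_prop

lemma line_compact {F : E2 → ℝ} (hF : HasCompactSupport F) (q : E2) {e : E2} (he : ‖e‖ = 1) :
    HasCompactSupport (fun t : ℝ => F (q + t • e)) := by
  apply hF.comp_isClosedEmbedding
  have : Isometry (fun t : ℝ => q + t • e) := by
    apply Isometry.of_dist_eq
    intro x y
    rw [dist_add_left, dist_eq_norm, ← sub_smul, norm_smul, he, mul_one, dist_eq_norm]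
  exact this.isClosedEmbedding

lemma fderiv_integrable {F : E2 → ℝ} (hF : ContDiff ℝ 1 F) (hc : HasCompactSupport F) (e : E2) :
    Integrable (fun p => fderiv ℝ F p e) := by
  apply Continuous.integrable_of_hasCompactSupport
  · exact (hF.continuous_fderiv (by norm_num)).clm_apply continuous_const
  · exact hc.fderiv_apply (𝕜 := ℝ) e

lemma line_int_zero {F : E2 → ℝ} (hF : ContDiff ℝ 1 F) (hc : HasCompactSupport F) (q : E2) {e : E2}
    (he : ‖e‖ = 1) : ∫ t : ℝ, fderiv ℝ F (q + t • e) e = 0 := by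
  have h1 := line_contDiff hF q e
  have h2 := line_compact hc q he
  have hd : ∀ t, deriv (fun t : ℝ => F (q + t • e)) t = fderiv ℝ F (q + t • e) e :=
    fun t => (line_deriv hF q e t).deriv
  have hcont : Continuous (fun t : ℝ => fderiv ℝ F (q + t • e) e) :=
    ((hF.continuous_fderiv (by norm_num)).comp (by fun_prop : Continuous fun t : ℝ => q + t • e)).clm_apply
      continuous_const
  have hci : Integrable (fun t : ℝ => fderiv ℝ F (q + t • e) e) := by
    apply hcont.integrable_of_hasCompactSupport
    have := h2.deriv
    rwa [funext hd] at this
  exact integral_eq_zero_of_hasDerivAt_of_integrable (fun t => line_deriv hF q e t) hci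
    (h1.continuous.integrable_of_hasCompactSupport h2)

lemma line_int_Ioi {F : E2 → ℝ} (hF : ContDiff ℝ 1 F) (hc : HasCompactSupport F) (q : E2) {e : E2}
    (he : ‖e‖ = 1) (b : ℝ) : ∫ t in Ioi b, fderiv ℝ F (q + t • e) e = - F (q + b • e) := by
  have hd : ∀ t, deriv (fun t : ℝ => F (q + t • e)) t = fderiv ℝ F (q + t • e) e :=
    fun t => (line_deriv hF q e t).deriv
  have := (line_compact hc q he).integral_Ioi_deriv_eq (line_contDiff hF q e) b
  simpa only [hd] using this

lemma norm_vec_one {c d : ℝ} (h1 : c ^ 2 + d ^ 2 = 1) : ‖vec c d‖ = 1 := by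
  have : ‖vec c d‖ ^ 2 = 1 ^ 2 := by rw [norm_sq_E2]; simp [h1]
  exact (sq_eq_sq₀ (norm_nonneg _) (by norm_num)).1 this

lemma frame_eq1 (c d c' d' a b : ℝ) : frame c d c' d' (a, b) = b • vec c' d' + a • vec c d := by
  simp only [frame, vec_lin]; rw [add_comm]
lemma frame_eq2 (c d c' d' a b : ℝ) : frame c d c' d' (a, b) = a • vec c d + b • vec c' d' := by
  simp only [frame, vec_lin]

section halfplane
variable {c d c' d' : ℝ}

lemma half_preimage (h2 : c' ^ 2 + d' ^ 2 = 1)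
    (h3 : c * c' + d * d' = 0) (h : E2 → ℝ) (x : ℝ × ℝ) :
    ({p : E2 | 0 < p 0 * c' + p 1 * d'}.indicator h) (frame c d c' d' x) =
      (univ ×ˢ Ioi (0:ℝ)).indicator (fun x => h (frame c d c' d' x)) x := by
  have : (x.1 * c + x.2 * c') * c' + (x.1 * d + x.2 * d') * d' = x.2 := by
    linear_combination x.1 * h3 + x.2 * h2
  simp only [indicator, mem_ofPred_eq, frame, vec_zero, vec_one, this, mem_prod, mem_univ, mem_Ioi,
    true_and]

lemma measurableSet_half (c' d' : ℝ) : MeasurableSet {p : E2 | 0 < p 0 * c' + p 1 * d'} := by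
  apply IsOpen.measurableSet
  apply isOpen_lt continuous_const; fun_prop

lemma half_normal (h1 : c ^ 2 + d ^ 2 = 1) (h2 : c' ^ 2 + d' ^ 2 = 1)
    (h3 : c * c' + d * d' = 0) {F : E2 → ℝ} (hF : ContDiff ℝ 1 F) (hc : HasCompactSupport F) :
    ∫ p in {p : E2 | 0 < p 0 * c' + p 1 * d'}, fderiv ℝ F p (vec c' d') =
      - ∫ a : ℝ, F (a • vec c d) := by
  rw [← integral_indicator (measurableSet_half c' d'), frame_integral h1 h2 h3]
  simp_rw [half_preimage h2 h3]
  rw [integral_indicator (MeasurableSet.univ.prod measurableSet_Ioi), Measure.volume_eq_prod,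
    ← Measure.prod_restrict, Measure.restrict_univ, integral_prod]
  · simp_rw [frame_eq2]
    rw [← integral_neg]
    congr 1; funext a
    rw [line_int_Ioi hF hc _ (norm_vec_one h2)]
    simp
  · have := frame_integrable h1 h2 h3 (fderiv_integrable hF hc (vec c' d'))
    rw [← Measure.restrict_univ (μ := (volume : Measure ℝ)), Measure.prod_restrict]
    simp only [Measure.restrict_univ]
    exact this.restrict

lemma half_tangent (h1 : c ^ 2 + d ^ 2 = 1) (h2 : c' ^ 2 + d' ^ 2 = 1)
    (h3 : c * c' + d * d' = 0) {F : E2 → ℝ} (hF : ContDiff ℝ 1 F) (hc : HasCompactSupport F) :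
    ∫ p in {p : E2 | 0 < p 0 * c' + p 1 * d'}, fderiv ℝ F p (vec c d) = 0 := by
  rw [← integral_indicator (measurableSet_half c' d'), frame_integral h1 h2 h3]
  simp_rw [half_preimage h2 h3]
  rw [integral_indicator (MeasurableSet.univ.prod measurableSet_Ioi), Measure.volume_eq_prod,
    ← Measure.prod_restrict, Measure.restrict_univ, integral_prod_symm]
  · simp_rw [frame_eq1]
    simp_rw [line_int_zero hF hc _ (norm_vec_one h1)]
    simp
  · have := frame_integrable h1 h2 h3 (fderiv_integrable hF hc (vec c d))
    rw [← Measure.restrict_univ (μ := (volume : Measure ℝ)), Measure.prod_restrict]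
    simp only [Measure.restrict_univ]
    exact this.restrict

lemma plane_zero (h1 : c ^ 2 + d ^ 2 = 1) {F : E2 → ℝ} (hF : ContDiff ℝ 1 F)
    (hc : HasCompactSupport F) :
    ∫ p, fderiv ℝ F p (vec c d) = 0 := by
  have h2 : (-d) ^ 2 + c ^ 2 = 1 := by linarith
  have h3 : c * (-d) + d * c = 0 := by ring
  rw [frame_integral h1 h2 h3, Measure.volume_eq_prod, integral_prod_symm]
  · simp_rw [frame_eq1]
    simp_rw [line_int_zero hF hc _ (norm_vec_one h1)]
    simp
  · exact frame_integrable h1 h2 h3 (fderiv_integrable hF hc (vec c d))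
end halfplane

/-- divergence in a rotated frame -/
lemma div2_frame {c d : ℝ} (h1 : c ^ 2 + d ^ 2 = 1) {w : E2 → E2} (hw : ContDiff ℝ 1 w) (p : E2) :
    div2 w p = fderiv ℝ (fun q => w q 0 * c + w q 1 * d) p (vec c d) +
      fderiv ℝ (fun q => w q 0 * (-d) + w q 1 * c) p (vec (-d) c) := by
  have hd := (hw.differentiable (by norm_num) p).hasFDerivAt
  have hcomp : ∀ i : Fin 2, HasFDerivAt (fun q => w q i)
      ((EuclideanSpace.proj i : E2 →L[ℝ] ℝ).comp (fderiv ℝ w p)) p := fun i =>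
    (EuclideanSpace.proj i : E2 →L[ℝ] ℝ).hasFDerivAt.comp p hd
  have e1 := ((hcomp 0).mul_const c).add ((hcomp 1).mul_const d)
  have e2 := ((hcomp 0).mul_const (-d)).add ((hcomp 1).mul_const c)
  have e1' := e1.fderiv
  have e2' := e2.fderiv
  change fderiv ℝ (fun q => w q 0 * c + w q 1 * d) p = _ at e1'
  change fderiv ℝ (fun q => w q 0 * (-d) + w q 1 * c) p = _ at e2'
  rw [e1', e2']
  simp only [div2, Fin.sum_univ_two, single_zero_eq, single_one_eq]
  rw [clm_E2 _ (vec c d), clm_E2 _ (vec (-d) c)]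
  simp
  linear_combination (-(fderiv ℝ w p (vec 1 0) 0) - (fderiv ℝ w p (vec 0 1) 1)) * h1

lemma div_half {c d : ℝ} (h1 : c ^ 2 + d ^ 2 = 1) {w : E2 → E2} (hw : ContDiff ℝ 1 w)
    (hc : HasCompactSupport w) :
    ∫ p in {p : E2 | 0 < p 0 * (-d) + p 1 * c}, div2 w p =
      - ∫ a : ℝ, (w (a • vec c d) 0 * (-d) + w (a • vec c d) 1 * c) := by
  have h2 : (-d) ^ 2 + c ^ 2 = 1 := by linarith
  have h3 : c * (-d) + d * c = 0 := by ring
  have hw' : ∀ i : Fin 2, ContDiff ℝ 1 (fun q => w q i) := fun i => by fun_prop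
  have hF1 : ContDiff ℝ 1 (fun q => w q 0 * c + w q 1 * d) :=
    ((hw' 0).mul contDiff_const).add ((hw' 1).mul contDiff_const)
  have hF2 : ContDiff ℝ 1 (fun q => w q 0 * (-d) + w q 1 * c) :=
    ((hw' 0).mul contDiff_const).add ((hw' 1).mul contDiff_const)
  have hs1 : HasCompactSupport (fun q => w q 0 * c + w q 1 * d) :=
    hc.comp_left (g := fun v : E2 => v 0 * c + v 1 * d) (by simp)
  have hs2 : HasCompactSupport (fun q => w q 0 * (-d) + w q 1 * c) :=
    hc.comp_left (g := fun v : E2 => v 0 * (-d) + v 1 * c) (by simp)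
  simp_rw [div2_frame h1 hw]
  rw [integral_add (fderiv_integrable hF1 hs1 _).restrict (fderiv_integrable hF2 hs2 _).restrict,
    half_tangent h1 h2 h3 hF1 hs1, half_normal h1 h2 h3 hF2 hs2, zero_add]

lemma div_plane {w : E2 → E2} (hw : ContDiff ℝ 1 w)
    (hc : HasCompactSupport w) : Integrable (div2 w) ∧ ∫ p, div2 w p = 0 := by
  have h1 : (1:ℝ) ^ 2 + 0 ^ 2 = 1 := by norm_num
  have h2 : (-(0:ℝ)) ^ 2 + 1 ^ 2 = 1 := by norm_num
  have hw' : ∀ i : Fin 2, ContDiff ℝ 1 (fun q => w q i) := fun i => by fun_prop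
  have hF1 : ContDiff ℝ 1 (fun q => w q 0 * (1:ℝ) + w q 1 * 0) :=
    ((hw' 0).mul contDiff_const).add ((hw' 1).mul contDiff_const)
  have hF2 : ContDiff ℝ 1 (fun q => w q 0 * (-(0:ℝ)) + w q 1 * 1) :=
    ((hw' 0).mul contDiff_const).add ((hw' 1).mul contDiff_const)
  have hs1 : HasCompactSupport (fun q => w q 0 * (1:ℝ) + w q 1 * 0) :=
    hc.comp_left (g := fun v : E2 => v 0 * (1:ℝ) + v 1 * 0) (by simp)
  have hs2 : HasCompactSupport (fun q => w q 0 * (-(0:ℝ)) + w q 1 * 1) :=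
    hc.comp_left (g := fun v : E2 => v 0 * (-(0:ℝ)) + v 1 * 1) (by simp)
  have e : div2 w = fun p => _ := funext (div2_frame h1 hw)
  rw [e]
  refine ⟨(fderiv_integrable hF1 hs1 _).add (fderiv_integrable hF2 hs2 _), ?_⟩
  rw [integral_add (fderiv_integrable hF1 hs1 _) (fderiv_integrable hF2 hs2 _),
    plane_zero h1 hF1 hs1, plane_zero h2 hF2 hs2, zero_add]

def Om : Set E2 := {p | (p 0 ^ 2 + p 1 ^ 2 < 4 ∧ 0 < p 0 ∧ 0 < p 1) ∨
  ((p 0 - 2) ^ 2 + (p 1 - 1) ^ 2 < 5 ∧ p 0 ≤ 0) ∨ ((p 0 - 1) ^ 2 + (p 1 - 2) ^ 2 < 5 ∧ p 1 ≤ 0)}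

lemma mem_Om {p : E2} : p ∈ Om ↔ (p 0 ^ 2 + p 1 ^ 2 < 4 ∧ 0 < p 0 ∧ 0 < p 1) ∨
  ((p 0 - 2) ^ 2 + (p 1 - 1) ^ 2 < 5 ∧ p 0 ≤ 0) ∨
  ((p 0 - 1) ^ 2 + (p 1 - 2) ^ 2 < 5 ∧ p 1 ≤ 0) := Iff.rfl

lemma mem_ball_E2 {p c : E2} {r : ℝ} (hr : 0 ≤ r) :
    p ∈ Metric.ball c r ↔ (p 0 - c 0) ^ 2 + (p 1 - c 1) ^ 2 < r ^ 2 := by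
  rw [Metric.mem_ball, dist_eq_norm, ← sq_lt_sq₀ (norm_nonneg _) hr, norm_sq_E2]
  simp

lemma Om_eq : (Metric.ball (0 : E2) 2 ∩ {p : E2 | 0 < p 0 ∧ 0 < p 1}) ∪
      (Metric.ball (EuclideanSpace.single (0 : Fin 2) (2:ℝ) +
        EuclideanSpace.single (1 : Fin 2) (1:ℝ)) (Real.sqrt 5) ∩ {p : E2 | p 0 ≤ 0}) ∪
      (Metric.ball (EuclideanSpace.single (0 : Fin 2) (1:ℝ) +
        EuclideanSpace.single (1 : Fin 2) (2:ℝ)) (Real.sqrt 5) ∩ {p : E2 | p 1 ≤ 0}) = Om := by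
  ext p
  rw [mem_union, mem_union, mem_inter_iff, mem_inter_iff, mem_inter_iff,
    mem_ball_E2 (by norm_num), mem_ball_E2 (Real.sqrt_nonneg _), mem_ball_E2 (Real.sqrt_nonneg _),
    mem_Om, Real.sq_sqrt (by norm_num), or_assoc]
  norm_num

lemma Om_facts {p : E2} (hp : p ∈ Om) : (0 < p 0 ∨ 0 < p 1) ∧ (p 0 < 0 → 0 < p 1) ∧
    (p 1 < 0 → 0 < p 0) ∧ p 0 ^ 2 + p 1 ^ 2 < 4 ∧ (p 0 ≤ 0 → 0 < p 1) ∧ (p 1 ≤ 0 → 0 < p 0) := by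
  rw [mem_Om] at hp
  have h1 : ∀ a b : ℝ, (a - 2) ^ 2 + (b - 1) ^ 2 < 5 → a ≤ 0 → 0 < b ∧ a ^ 2 + b ^ 2 < 4 := by
    intro a b h ha
    have hb : 0 < b := by nlinarith [sq_nonneg a, sq_nonneg b]
    have hb2 : b < 2 := by nlinarith [sq_nonneg a, sq_nonneg b]
    exact ⟨hb, by nlinarith⟩
  rcases hp with ⟨h, h0, h1⟩ | ⟨h, h0⟩ | ⟨h, h0⟩
  · exact ⟨Or.inl h0, fun _ => h1, fun _ => h0, h, fun _ => h1, fun _ => h0⟩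
  · obtain ⟨a, b⟩ := h1 _ _ h h0
    exact ⟨Or.inr a, fun _ => a, fun h => by linarith, b, fun _ => a, fun h => by linarith⟩
  · obtain ⟨a, b⟩ := h1 (p 1) (p 0) (by linarith) h0
    exact ⟨Or.inl a, fun h => by linarith, fun _ => a, by linarith, fun h => by linarith, fun _ => a⟩

lemma isOpen_Om : IsOpen Om := by
  have : Om = {p : E2 | p 0 ^ 2 + p 1 ^ 2 < 4 ∧ 0 < p 0 ∧ 0 < p 1} ∪
      {p : E2 | p 0 ^ 2 + p 1 ^ 2 < 4 ∧ (p 0 - 2) ^ 2 + (p 1 - 1) ^ 2 < 5 ∧ 0 < p 1} ∪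
      {p : E2 | p 0 ^ 2 + p 1 ^ 2 < 4 ∧ (p 0 - 1) ^ 2 + (p 1 - 2) ^ 2 < 5 ∧ 0 < p 0} := by
    ext p
    constructor
    · intro hp
      have hf := Om_facts hp
      rcases mem_Om.1 hp with h | ⟨h, h0⟩ | ⟨h, h0⟩
      · exact Or.inl (Or.inl h)
      · exact Or.inl (Or.inr ⟨hf.2.2.2.1, h, hf.2.2.2.2.1 h0⟩)
      · exact Or.inr ⟨hf.2.2.2.1, h, hf.2.2.2.2.2 h0⟩
    · rintro ((h | ⟨h1, h2, h3⟩) | ⟨h1, h2, h3⟩)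
      · exact Or.inl h
      · by_cases h0 : p 0 ≤ 0
        · exact Or.inr (Or.inl ⟨h2, h0⟩)
        · exact Or.inl ⟨h1, not_le.1 h0, h3⟩
      · by_cases h0 : p 1 ≤ 0
        · exact Or.inr (Or.inr ⟨h2, h0⟩)
        · exact Or.inl ⟨h1, h3, not_le.1 h0⟩
  rw [this]
  refine (IsOpen.union ?_ ?_).union ?_
  all_goals
    refine IsOpen.and (isOpen_lt ?_ ?_) (IsOpen.and (isOpen_lt ?_ ?_) (isOpen_lt ?_ ?_)) <;> fun_prop

lemma zero_notMem_Om : (0 : E2) ∉ Om := fun h => by have := (Om_facts h).1; simp at this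

lemma theta_neg_iff (p : E2) : theta p < 0 ↔ p 1 < 0 := by
  unfold theta; rw [Complex.arg_neg_iff]; simp

lemma theta_le_iff (p : E2) : theta p ≤ π / 2 ↔ 0 ≤ p 0 ∨ p 1 < 0 := by
  unfold theta; rw [Complex.arg_le_pi_div_two_iff]; simp

lemma theta_coord (p : E2) : p 0 = ‖p‖ * cos (theta p) ∧ p 1 = ‖p‖ * sin (theta p) := by
  have hn : ‖(p 0 : ℂ) + (p 1 : ℂ) * Complex.I‖ = ‖p‖ := by
    have : ‖(p 0 : ℂ) + (p 1 : ℂ) * Complex.I‖ ^ 2 = ‖p‖ ^ 2 := by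
      rw [norm_sq_E2, Complex.sq_norm, Complex.normSq_add_mul_I]
    exact (sq_eq_sq₀ (norm_nonneg _) (norm_nonneg _)).1 this
  unfold theta
  rw [← hn, Complex.norm_mul_cos_arg, Complex.norm_mul_sin_arg]
  simp

lemma theta_measurable : Measurable theta := by
  unfold theta
  refine Complex.measurable_arg.comp ?_
  refine Continuous.measurable ?_
  fun_prop

lemma theta_gt {p : E2} (hp : p ∈ Om) : -(π/2) < theta p ∧ theta p < π := by
  have h := Om_facts hp
  unfold theta
  constructor
  · rw [Complex.neg_pi_div_two_lt_arg_iff]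
    simp
    by_contra! hh
    have := h.2.2.1 hh.2
    linarith
  · rw [Complex.arg_lt_pi_iff]
    simp
    by_contra! hh
    have := h.2.1 hh.1
    linarith

lemma norm_pos_Om {p : E2} (hp : p ∈ Om) : 0 < ‖p‖ := by
  rw [norm_pos_iff]; rintro rfl; exact zero_notMem_Om hp

lemma sector {p : E2} (hp : p ∈ Om) {s : ℝ} (h0 : 0 ≤ s) (h1 : s ≤ π / 2) :
    (s < theta p → 0 < p 0 * (-sin s) + p 1 * cos s) ∧
    (theta p < s → p 0 * (-sin s) + p 1 * cos s < 0) := by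
  obtain ⟨a, b⟩ := theta_gt hp
  have hn := norm_pos_Om hp
  have e : p 0 * (-sin s) + p 1 * cos s = ‖p‖ * sin (theta p - s) := by
    conv_lhs => rw [(theta_coord p).1, (theta_coord p).2]
    rw [sin_sub]; ring
  rw [e]
  constructor
  · intro h
    exact mul_pos hn (sin_pos_of_pos_of_lt_pi (by linarith) (by linarith))
  · intro h
    exact mul_neg_of_pos_of_neg hn (sin_neg_of_neg_of_neg_pi_lt (by linarith) (by linarith))

/-- the vector field -/
noncomputable def zf (p : E2) : E2 := if theta p < 0 then
        EuclideanSpace.single (1 : Fin 2) (1:ℝ)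
      else if theta p ≤ π/2 then ‖p‖⁻¹ • rot p
      else EuclideanSpace.single (0 : Fin 2) (-1:ℝ)

noncomputable def psi (p : E2) : ℝ := Real.sqrt (max (p 0) 0 ^ 2 + max (p 1) 0 ^ 2)

lemma zf_eq {p : E2} (hp : p ∈ Om) :
    zf p = vec (-(max (p 1) 0 / psi p)) (max (p 0) 0 / psi p) := by
  have h := Om_facts hp
  unfold zf
  simp only [theta_neg_iff, theta_le_iff]
  split_ifs with h1 h2
  · have h0 := h.2.2.1 h1
    have : psi p = p 0 := by
      rw [psi, max_eq_right h1.le, max_eq_left h0.le]; simp [Real.sqrt_sq h0.le]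
    rw [single_one_eq, this, max_eq_right h1.le, max_eq_left h0.le, div_self h0.ne']
    simp
  · have h2 : 0 ≤ p 0 := by tauto
    have h1 : 0 ≤ p 1 := not_lt.1 h1
    have : psi p = ‖p‖ := by
      rw [psi, max_eq_left h1, max_eq_left h2, ← norm_sq_E2, Real.sqrt_sq (norm_nonneg _)]
    rw [rot_eq, this, max_eq_left h1, max_eq_left h2]
    apply E2_ext <;> simp <;> ring
  · have h2 : p 0 < 0 := by
      by_contra hh; exact h2 (Or.inl (not_lt.1 hh))
    have h0 := h.2.1 h2
    have : psi p = p 1 := by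
      rw [psi, max_eq_right h2.le, max_eq_left h0.le]; simp [Real.sqrt_sq h0.le]
    rw [single_zero_eq, this, max_eq_right h2.le, max_eq_left h0.le, div_self h0.ne']
    simp

lemma hasDerivAt_q (x : ℝ) : HasDerivAt (fun x : ℝ => max x 0 ^ 2) (2 * max x 0) x := by
  rcases lt_trichotomy x 0 with h | h | h
  · have : (fun x : ℝ => max x 0 ^ 2) =ᶠ[𝓝 x] fun _ => 0 := by
      filter_upwards [Iio_mem_nhds h] with y hy
      rw [max_eq_right (le_of_lt hy)]; simp
    rw [max_eq_right h.le]
    simpa using (hasDerivAt_const x (0:ℝ)).congr_of_eventuallyEq this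
  · subst h
    rw [hasDerivAt_iff_isLittleO_nhds_zero]
    simp only [zero_add, max_self, mul_zero, smul_zero, sub_zero, ne_eq, OfNat.ofNat_ne_zero,
      not_false_eq_true, zero_pow]
    have h1 : (fun h : ℝ => max h 0 ^ 2) =O[𝓝 0] fun h : ℝ => h ^ 2 := by
      apply Asymptotics.IsBigO.of_bound 1
      filter_upwards with y
      rw [one_mul, norm_pow, norm_pow]
      gcongr
      rw [Real.norm_eq_abs, Real.norm_eq_abs, abs_of_nonneg (le_max_right _ _)]
      exact max_le (le_abs_self _) (abs_nonneg _)
    exact h1.trans_isLittleO (by simpa using Asymptotics.isLittleO_pow_id (𝕜 := ℝ) (n := 2) (by norm_num))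
  · have : (fun x : ℝ => max x 0 ^ 2) =ᶠ[𝓝 x] fun x => x ^ 2 := by
      filter_upwards [Ioi_mem_nhds h] with y hy
      rw [max_eq_left (le_of_lt hy)]
    rw [max_eq_left h.le]
    simpa using (hasDerivAt_pow 2 x).congr_of_eventuallyEq this

lemma contDiff_q : ContDiff ℝ 1 (fun x : ℝ => max x 0 ^ 2) := by
  rw [contDiff_one_iff_deriv]
  refine ⟨fun x => (hasDerivAt_q x).differentiableAt, ?_⟩
  rw [funext fun x => (hasDerivAt_q x).deriv]
  fun_prop

lemma psi_arg_pos {p : E2} (hp : 0 < p 0 ∨ 0 < p 1) : 0 < max (p 0) 0 ^ 2 + max (p 1) 0 ^ 2 := by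
  rcases hp with h | h
  · have : 0 < max (p 0) 0 := lt_max_of_lt_left h
    positivity
  · have : 0 < max (p 1) 0 := lt_max_of_lt_left h
    positivity

lemma psi_contDiffAt {p : E2} (hp : 0 < p 0 ∨ 0 < p 1) : ContDiffAt ℝ 1 psi p := by
  unfold psi
  apply ContDiffAt.sqrt
  · apply ContDiff.contDiffAt
    exact (contDiff_q.comp (by fun_prop : ContDiff ℝ 1 fun p : E2 => p 0)).add
      (contDiff_q.comp (by fun_prop : ContDiff ℝ 1 fun p : E2 => p 1))
  · exact (psi_arg_pos hp).ne'

lemma psi_hasDeriv {p : E2} (hp : 0 < p 0 ∨ 0 < p 1) (v : E2) :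
    fderiv ℝ psi p v = (max (p 0) 0 * v 0 + max (p 1) 0 * v 1) / psi p := by
  have hd : DifferentiableAt ℝ psi p := (psi_contDiffAt hp).differentiableAt (by norm_num)
  have hpos := psi_arg_pos hp
  have h1 := hd.hasFDerivAt.hasLineDerivAt v
  have e : ∀ i : Fin 2, HasDerivAt (fun t : ℝ => (p + t • v) i) (v i) 0 := by
    intro i
    simpa using ((hasDerivAt_id (0:ℝ)).mul_const (v i)).const_add (p i)
  have q : ∀ i : Fin 2, HasDerivAt (fun t : ℝ => max ((p + t • v) i) 0 ^ 2)
      (2 * max (p i) 0 * v i) 0 := by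
    intro i
    have h0 : (p + (0:ℝ) • v) i = p i := by simp
    have h5 := hasDerivAt_q ((p + (0:ℝ) • v) i)
    have := HasDerivAt.comp (0:ℝ) h5 (e i)
    rw [h0] at this
    exact this
  have h2 := ((q 0).add (q 1)).sqrt (by simpa using hpos.ne')
  have h3 : HasDerivAt (fun t : ℝ => psi (p + t • v)) (fderiv ℝ psi p v) 0 := h1
  rw [h3.unique h2]
  simp [psi]
  ring

noncomputable def ws (ϕ : E2 → ℝ) (p : E2) : E2 :=
  vec (psi p * fderiv ℝ ϕ p (vec 0 1)) (-(psi p * fderiv ℝ ϕ p (vec 1 0)))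

lemma contDiffAt_vec {f g : E2 → ℝ} {p : E2} (hf : ContDiffAt ℝ 1 f p) (hg : ContDiffAt ℝ 1 g p) :
    ContDiffAt ℝ 1 (fun p => vec (f p) (g p)) p := by
  rw [contDiffAt_euclidean]
  intro i; fin_cases i
  · simpa using hf
  · simpa using hg

lemma fderiv_apply_contDiff {ϕ : E2 → ℝ} (hϕ : ContDiff ℝ 2 ϕ) (v : E2) :
    ContDiff ℝ 1 (fun p => fderiv ℝ ϕ p v) :=
  (hϕ.fderiv_right (m := 1) (by norm_num)).clm_apply contDiff_const

lemma ws_tsupport (ϕ : E2 → ℝ) : tsupport (ws ϕ) ⊆ tsupport ϕ := by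
  apply closure_minimal _ (isClosed_tsupport _)
  intro p hp
  by_contra h
  have h0 : fderiv ℝ ϕ p = 0 := by
    by_contra h1
    exact h (support_fderiv_subset ℝ h1)
  apply hp
  simp only [ws, h0]
  apply E2_ext <;> simp

lemma ws_contDiff {ϕ : E2 → ℝ} (hϕ : ContDiff ℝ 2 ϕ) (hs : tsupport ϕ ⊆ Om) :
    ContDiff ℝ 1 (ws ϕ) := by
  rw [contDiff_iff_contDiffAt]
  intro p
  by_cases hp : p ∈ tsupport ϕ
  · have hps := psi_contDiffAt (Om_facts (hs hp)).1
    apply contDiffAt_vec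
    · exact hps.mul (fderiv_apply_contDiff hϕ _).contDiffAt
    · exact (hps.mul (fderiv_apply_contDiff hϕ _).contDiffAt).neg
  · have : ws ϕ =ᶠ[𝓝 p] fun _ => 0 := by
      exact notMem_tsupport_iff_eventuallyEq.1 fun h => hp (ws_tsupport ϕ h)
    exact contDiffAt_const.congr_of_eventuallyEq this

lemma ws_compact {ϕ : E2 → ℝ} (hc : HasCompactSupport ϕ) : HasCompactSupport (ws ϕ) :=
  hc.of_isClosed_subset (isClosed_tsupport _) (ws_tsupport ϕ)

lemma div2_zero {w : E2 → E2} {p : E2} (hp : p ∉ tsupport w) : div2 w p = 0 := by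
  have h0 : fderiv ℝ w p = 0 := by
    by_contra h1
    exact hp (support_fderiv_subset ℝ h1)
  simp [div2, h0]

lemma snd_fderiv {ϕ : E2 → ℝ} (hϕ : ContDiff ℝ 2 ϕ) (p u v : E2) :
    fderiv ℝ (fun p => fderiv ℝ ϕ p v) p u = fderiv ℝ (fderiv ℝ ϕ) p u v := by
  have hd : DifferentiableAt ℝ (fderiv ℝ ϕ) p :=
    (hϕ.fderiv_right (m := 1) (by norm_num)).differentiable (by norm_num) p
  have := (hd.hasFDerivAt.clm_apply (hasFDerivAt_const v p)).fderiv
  rw [this]; simp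

lemma snd_symm {ϕ : E2 → ℝ} (hϕ : ContDiff ℝ 2 ϕ) (p u v : E2) :
    fderiv ℝ (fderiv ℝ ϕ) p u v = fderiv ℝ (fderiv ℝ ϕ) p v u :=
  (hϕ.contDiffAt.isSymmSndFDerivAt (by simp)) u v

lemma div2_vec {f g : E2 → ℝ} {p : E2} (hf : DifferentiableAt ℝ f p) (hg : DifferentiableAt ℝ g p) :
    div2 (fun p => vec (f p) (g p)) p = fderiv ℝ f p (vec 1 0) + fderiv ℝ g p (vec 0 1) := by
  have hd : DifferentiableAt ℝ (fun p => vec (f p) (g p)) p := by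
    rw [differentiableAt_euclidean]
    intro i; fin_cases i
    · simpa using hf
    · simpa using hg
  have hcomp : ∀ i : Fin 2, HasFDerivAt (fun q => vec (f q) (g q) i)
      ((EuclideanSpace.proj i : E2 →L[ℝ] ℝ).comp (fderiv ℝ (fun p => vec (f p) (g p)) p)) p := fun i =>
    (EuclideanSpace.proj i : E2 →L[ℝ] ℝ).hasFDerivAt.comp p hd.hasFDerivAt
  have h0 := hcomp 0
  have h1 := hcomp 1
  simp only [vec_zero] at h0
  simp only [vec_one] at h1
  rw [h0.fderiv, h1.fderiv]
  simp [div2, Fin.sum_univ_two, single_zero_eq, single_one_eq]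

lemma div_ws {ϕ : E2 → ℝ} (hϕ : ContDiff ℝ 2 ϕ) {p : E2} (hp : p ∈ Om) :
    div2 (ws ϕ) p = fderiv ℝ ϕ p (zf p) := by
  have hps := (psi_contDiffAt (Om_facts hp).1).differentiableAt (by norm_num)
  have hdx := ((fderiv_apply_contDiff hϕ (vec 1 0)).differentiable (by norm_num) p)
  have hdy := ((fderiv_apply_contDiff hϕ (vec 0 1)).differentiable (by norm_num) p)
  have e := div2_vec (f := fun p => psi p * fderiv ℝ ϕ p (vec 0 1))
    (g := fun p => -(psi p * fderiv ℝ ϕ p (vec 1 0))) (hps.mul hdy) (hps.mul hdx).neg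
  have e1 := (hps.hasFDerivAt.mul hdy.hasFDerivAt).fderiv
  have e2 := (hps.hasFDerivAt.mul hdx.hasFDerivAt).neg.fderiv
  change fderiv ℝ (fun p => psi p * fderiv ℝ ϕ p (vec 0 1)) p = _ at e1
  change fderiv ℝ (fun p => -(psi p * fderiv ℝ ϕ p (vec 1 0))) p = _ at e2
  rw [e1, e2] at e
  change div2 (ws ϕ) p = _ at e
  rw [e, clm_E2 _ (zf p), zf_eq hp]
  simp only [add_apply, neg_apply,
    smul_apply, snd_fderiv hϕ,
    psi_hasDeriv (Om_facts hp).1, vec_zero, vec_one, smul_eq_mul]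
  rw [snd_symm hϕ p (vec 0 1) (vec 1 0)]
  ring

lemma fderiv_notMem {ϕ : E2 → ℝ} {p : E2} (hp : p ∉ tsupport ϕ) : fderiv ℝ ϕ p = 0 := by
  by_contra h1
  exact hp (support_fderiv_subset ℝ h1)

lemma setInt_div {w : E2 → E2} {A : Set E2} (hs : tsupport w ⊆ A) :
    ∫ p in A, div2 w p = ∫ p, div2 w p :=
  setIntegral_eq_integral_of_forall_compl_eq_zero fun p hp => div2_zero fun h => hp (hs h)

lemma divfree_zf : DivFreeOn Om zf := by
  intro ϕ hϕ hc hs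
  have hϕ2 : ContDiff ℝ 2 ϕ := contDiff_infty.1 hϕ 2
  simp_rw [inner_gradient_E2]
  rw [← (div_plane (ws_contDiff hϕ2 hs) (ws_compact hc)).2,
    ← setInt_div ((ws_tsupport ϕ).trans hs)]
  exact setIntegral_congr_fun isOpen_Om.measurableSet fun p hp => (div_ws hϕ2 hp).symm

noncomputable def Gf (g : ℝ → ℝ) (θ : ℝ) : ℝ := if θ < 0 then 0 else if θ ≤ π/2 then g θ else 1

noncomputable def uf (g : ℝ → ℝ) (p : E2) : ℝ := if theta p < 0 then 0
      else if theta p ≤ π/2 then g (theta p) else 1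

lemma uf_eq (g : ℝ → ℝ) (p : E2) : uf g p = Gf g (theta p) := rfl

noncomputable def sf (g : ℝ → ℝ) (t : ℝ) : ℝ := sInf ({θ | 0 ≤ θ ∧ t < Gf g θ} ∪ Ici (π/2))

lemma sf_nonempty (g : ℝ → ℝ) (t : ℝ) : ({θ | 0 ≤ θ ∧ t < Gf g θ} ∪ Ici (π/2)).Nonempty :=
  ⟨π/2, Or.inr self_mem_Ici⟩

lemma sf_lower (g : ℝ → ℝ) (t : ℝ) : ∀ θ ∈ ({θ | 0 ≤ θ ∧ t < Gf g θ} ∪ Ici (π/2)), 0 ≤ θ := by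
  rintro θ (h | h)
  · exact h.1
  · exact le_trans (by positivity) (mem_Ici.1 h)

lemma sf_bdd (g : ℝ → ℝ) (t : ℝ) : BddBelow ({θ | 0 ≤ θ ∧ t < Gf g θ} ∪ Ici (π/2)) :=
  ⟨0, fun θ h => sf_lower g t θ h⟩

lemma sf_nonneg (g : ℝ → ℝ) (t : ℝ) : 0 ≤ sf g t :=
  le_csInf (sf_nonempty g t) (sf_lower g t)

lemma sf_le (g : ℝ → ℝ) (t : ℝ) : sf g t ≤ π / 2 :=
  csInf_le (sf_bdd g t) (Or.inr self_mem_Ici)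

lemma sf_mono (g : ℝ → ℝ) : Monotone (sf g) := by
  intro a b hab
  apply csInf_le_csInf (sf_bdd g a) (sf_nonempty g b)
  rintro θ (h | h)
  · exact Or.inl ⟨h.1, lt_of_le_of_lt hab h.2⟩
  · exact Or.inr h


lemma Gf_mem {g : ℝ → ℝ} (hg01 : ∀ y ∈ Icc (0:ℝ) (π/2), g y ∈ Icc (0:ℝ) 1) (θ : ℝ) : 0 ≤ Gf g θ ∧ Gf g θ ≤ 1 := by
  unfold Gf
  split_ifs with h1 h2
  · norm_num
  · exact hg01 θ ⟨not_lt.1 h1, h2⟩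
  · norm_num


lemma Gf_mono {g : ℝ → ℝ} (hg : MonotoneOn g (Icc 0 (π/2)))
    (hg01 : ∀ y ∈ Icc (0:ℝ) (π/2), g y ∈ Icc (0:ℝ) 1)
    : Monotone (Gf g) := by
  intro a b hab
  unfold Gf
  split_ifs with h1 h2 h3 h4 h5 h6 h7 h8
  · norm_num
  · exact (hg01 b ⟨not_lt.1 h2, h3⟩).1
  · norm_num
  · linarith
  · exact hg ⟨not_lt.1 h1, h4⟩ ⟨not_lt.1 h5, h6⟩ hab
  · exact (hg01 a ⟨not_lt.1 h1, h4⟩).2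
  · linarith
  · linarith
  · norm_num

lemma sf_gt {g : ℝ → ℝ} (hg : MonotoneOn g (Icc 0 (π/2)))
    (hg01 : ∀ y ∈ Icc (0:ℝ) (π/2), g y ∈ Icc (0:ℝ) 1)
    {t θ : ℝ} (ht : t ∈ Ioo (0:ℝ) 1) (h : sf g t < θ) : t < Gf g θ := by
  obtain ⟨θ', h1, h2⟩ := exists_lt_of_csInf_lt (sf_nonempty g t) h
  rcases h1 with h1 | h1
  · exact lt_of_lt_of_le h1.2 (Gf_mono hg hg01 h2.le)
  · have h1 := mem_Ici.1 h1
    have : Gf g θ = 1 := by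
      unfold Gf
      have := Real.pi_pos
      rw [if_neg (by linarith), if_neg (by linarith)]
    rw [this]; exact ht.2

lemma sf_lt {g : ℝ → ℝ} {t θ : ℝ} (ht : t ∈ Ioo (0:ℝ) 1) (h : θ < sf g t) : Gf g θ ≤ t := by
  by_contra! hh
  by_cases h0 : 0 ≤ θ
  · exact absurd (csInf_le (sf_bdd g t) (Or.inl ⟨h0, hh⟩)) (not_le.2 h)
  · have : Gf g θ = 0 := by
      unfold Gf; rw [if_pos (not_le.1 h0)]
    rw [this] at hh
    linarith [ht.1]

lemma uf_measurable {g : ℝ → ℝ} (hg : MonotoneOn g (Icc 0 (π/2)))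
    (hg01 : ∀ y ∈ Icc (0:ℝ) (π/2), g y ∈ Icc (0:ℝ) 1)
    : Measurable (uf g) :=
  (Gf_mono hg hg01).measurable.comp theta_measurable

lemma line_null (s : ℝ) : volume {p : E2 | p 0 * (-sin s) + p 1 * cos s = 0} = 0 := by
  let L : E2 →ₗ[ℝ] ℝ :=
    { toFun := fun p => p 0 * (-sin s) + p 1 * cos s
      map_add' := by intro p q; simp; ring
      map_smul' := by intro p q; simp; ring }
  have := Measure.addHaar_submodule (volume : Measure E2) (LinearMap.ker L) (by
    intro h
    have : vec (-sin s) (cos s) ∈ LinearMap.ker L := by rw [h]; trivial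
    have h2 : L (vec (-sin s) (cos s)) = 0 := this
    simp only [L, LinearMap.coe_mk, AddHom.coe_mk, vec_zero, vec_one] at h2
    nlinarith [sin_sq_add_cos_sq s])
  exact this

lemma sin_form (p : E2) (s : ℝ) :
    p 0 * (-sin s) + p 1 * cos s = ‖p‖ * sin (theta p - s) := by
  conv_lhs => rw [(theta_coord p).1, (theta_coord p).2]
  rw [sin_sub]; ring

lemma layer_cake {g : ℝ → ℝ} (hg : MonotoneOn g (Icc 0 (π/2)))
    (hg01 : ∀ y ∈ Icc (0:ℝ) (π/2), g y ∈ Icc (0:ℝ) 1)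
    {h : E2 → ℝ} (hi : Integrable h) (h0 : ∀ p ∉ Om, h p = 0) :
    ∫ p in Om, uf g p * h p = ∫ t in Ioo (0:ℝ) 1,
      ∫ p in {p : E2 | 0 < p 0 * (-sin (sf g t)) + p 1 * cos (sf g t)}, h p := by
  rw [setIntegral_eq_integral_of_forall_compl_eq_zero (fun p hp => by rw [h0 p hp, mul_zero])]
  let S : Set (E2 × ℝ) := {x | x.2 < uf g x.1}
  have hS : MeasurableSet S :=
    measurableSet_lt measurable_snd ((uf_measurable hg hg01).comp measurable_fst)
  have hInteg : Integrable (Function.uncurry fun p t => S.indicator (fun x => h x.1) (p, t))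
      (volume.prod (volume.restrict (Ioo (0:ℝ) 1))) := by
    exact (hi.comp_fst _).indicator hS
  have e1 : ∀ p, uf g p * h p = ∫ t in Ioo (0:ℝ) 1, S.indicator (fun x => h x.1) (p, t) := by
    intro p
    have hm := Gf_mem hg01 (theta p)
    rw [← uf_eq] at hm
    have : ∀ t, S.indicator (fun x => h x.1) (p, t) = (Iio (uf g p)).indicator (fun _ => h p) t := by
      intro t
      rfl
    simp_rw [this]
    rw [setIntegral_indicator measurableSet_Iio, setIntegral_const, smul_eq_mul]
    congr 1
    have : Ioo (0:ℝ) 1 ∩ Iio (uf g p) = Ioo 0 (uf g p) := by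
      ext t; simp only [mem_inter_iff, mem_Ioo, mem_Iio]
      constructor
      · rintro ⟨⟨a, b⟩, c⟩; exact ⟨a, c⟩
      · rintro ⟨a, b⟩; exact ⟨⟨a, by linarith⟩, b⟩
    rw [this]
    simp [Measure.real, Real.volume_Ioo, hm.1]
  simp_rw [e1]
  rw [integral_integral_swap hInteg]
  apply setIntegral_congr_fun measurableSet_Ioo
  intro t ht
  change ∫ p, S.indicator (fun x => h x.1) (p, t) = ∫ p in {p : E2 | 0 < p 0 * (-sin (sf g t)) + p 1 * cos (sf g t)}, h p
  rw [← integral_indicator (measurableSet_half _ _)]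
  apply integral_congr_ae
  have hn : ∀ᵐ p : E2, ¬ (p 0 * (-sin (sf g t)) + p 1 * cos (sf g t) = 0) := by
    rw [ae_iff]; simpa only [not_not] using line_null (sf g t)
  filter_upwards [hn] with p hp
  by_cases hpO : p ∈ Om
  · have hsec := sector hpO (sf_nonneg g t) (sf_le g t)
    rcases lt_trichotomy (theta p) (sf g t) with hlt | heq | hgt
    · rw [indicator_of_notMem, indicator_of_notMem]
      · exact not_lt.2 (hsec.2 hlt).le
      · exact not_lt.2 (sf_lt ht hlt)
    · exfalso; apply hp; rw [sin_form, heq]; simp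
    · rw [indicator_of_mem, indicator_of_mem]
      · exact hsec.1 hgt
      · exact sf_gt hg hg01 ht hgt
  · have hz := h0 p hpO
    simp [indicator, hz]

noncomputable def polar (s r : ℝ) : E2 := r • vec (cos s) (sin s)

lemma polar_notMem {s r : ℝ} (h0 : 0 ≤ s) (h1 : s ≤ π / 2) (hr : r ∉ Ioo (0:ℝ) 2) :
    polar s r ∉ Om := by
  intro h
  apply hr
  have hf := Om_facts h
  simp only [polar, PiLp.smul_apply, vec_zero, vec_one, smul_eq_mul] at hf
  have hc : 0 ≤ cos s := cos_nonneg_of_mem_Icc ⟨by linarith, h1⟩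
  have hs : 0 ≤ sin s := sin_nonneg_of_nonneg_of_le_pi h0 (by linarith [pi_pos])
  have hr0 : 0 < r := by
    by_contra! hh
    rcases hf.1 with h | h
    · nlinarith
    · nlinarith
  refine ⟨hr0, ?_⟩
  have : r ^ 2 < 4 := by nlinarith [hf.2.2.2.1, sin_sq_add_cos_sq s]
  nlinarith

lemma polar_mem {s r : ℝ} (h0 : 0 ≤ s) (h1 : s ≤ π / 2) (hr : r ∈ Ioo (0:ℝ) 2) :
    polar s r ∈ Om := by
  have hc : 0 ≤ cos s := cos_nonneg_of_mem_Icc ⟨by linarith, h1⟩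
  have hs : 0 ≤ sin s := sin_nonneg_of_nonneg_of_le_pi h0 (by linarith [pi_pos])
  have hsc := sin_sq_add_cos_sq s
  rw [mem_Om]
  simp only [polar, PiLp.smul_apply, vec_zero, vec_one, smul_eq_mul]
  have h2 := hr.1
  have h3 := hr.2
  rcases hc.eq_or_lt with hc | hc
  · rw [← hc] at hsc ⊢
    have : sin s = 1 := by nlinarith
    rw [this]
    right; left; constructor
    · nlinarith
    · simp
  · rcases hs.eq_or_lt with hs | hs
    · rw [← hs] at hsc ⊢
      have : cos s = 1 := by nlinarith
      rw [this]
      right; right; constructor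
      · nlinarith
      · simp
    · left
      have e : (r * cos s) ^ 2 + (r * sin s) ^ 2 = r ^ 2 := by linear_combination r ^ 2 * hsc
      refine ⟨by rw [e]; nlinarith, by positivity, by positivity⟩

lemma ray_int {F : E2 → ℝ} (hF : ∀ p ∉ Om, F p = 0) {s : ℝ} (h0 : 0 ≤ s) (h1 : s ≤ π / 2) :
    ∫ r in Ioo (0:ℝ) 2, F (polar s r) = ∫ r, F (polar s r) :=
  setIntegral_eq_integral_of_forall_compl_eq_zero fun _ hr => hF _ (polar_notMem h0 h1 hr)

noncomputable def Mf (g : ℝ → ℝ) : Measure E2 :=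
  Measure.map (fun x : ℝ × ℝ => polar (sf g x.2) x.1)
    ((volume.restrict (Ioo (0:ℝ) 2)).prod (volume.restrict (Ioo (0:ℝ) 1)))

lemma polar_measurable (g : ℝ → ℝ) : Measurable (fun x : ℝ × ℝ => polar (sf g x.2) x.1) := by
  have : Continuous (fun y : ℝ × ℝ => polar y.2 y.1) := by
    unfold polar
    exact continuous_fst.smul (continuous_vec (by fun_prop) (by fun_prop))
  exact this.measurable.comp (measurable_fst.prodMk ((sf_mono g).measurable.comp measurable_snd))

instance (g : ℝ → ℝ) : IsFiniteMeasure (Mf g) := by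
  unfold Mf; infer_instance

lemma Mf_Om (g : ℝ → ℝ) : Mf g Om ≠ 0 := by
  rw [Mf, Measure.map_apply (polar_measurable g) isOpen_Om.measurableSet]
  have : (Ioo (0:ℝ) 2) ×ˢ (Ioo (0:ℝ) 1) ⊆ (fun x : ℝ × ℝ => polar (sf g x.2) x.1) ⁻¹' Om := by
    rintro ⟨r, t⟩ ⟨hr, ht⟩
    exact polar_mem (sf_nonneg g t) (sf_le g t) hr
  apply ne_of_gt
  refine lt_of_lt_of_le ?_ (measure_mono this)
  rw [Measure.prod_prod]
  simp

lemma Mf_ae (g : ℝ → ℝ) : ∀ᵐ p ∂(Mf g), p ∈ Om := by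
  rw [Mf]
  refine (ae_map_iff (p := fun p => p ∈ Om) (polar_measurable g).aemeasurable isOpen_Om.measurableSet).2 ?_
  rw [Measure.prod_restrict]
  filter_upwards [self_mem_ae_restrict (measurableSet_Ioo.prod measurableSet_Ioo)] with x hx
  exact polar_mem (sf_nonneg g _) (sf_le g _) hx.1

lemma Mf_integral (g : ℝ → ℝ) {F : E2 → ℝ} (hm : Measurable F) {C : ℝ} (hb : ∀ p, ‖F p‖ ≤ C) :
    ∫ p, F p ∂(Mf g) = ∫ t in Ioo (0:ℝ) 1, ∫ r in Ioo (0:ℝ) 2, F (polar (sf g t) r) := by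
  rw [Mf, integral_map (polar_measurable g).aemeasurable hm.aestronglyMeasurable, integral_prod_symm]
  apply Integrable.of_bound (C := C)
  · exact (hm.comp (polar_measurable g)).aestronglyMeasurable
  · exact Eventually.of_forall fun x => hb _

/-- unit angular field -/
noncomputable def eh (p : E2) : E2 := ‖p‖⁻¹ • rot p

lemma rot_measurable : Continuous rot := by
  have : rot = fun p => vec (-(p 1)) (p 0) := funext rot_eq
  rw [this]; exact continuous_vec (by fun_prop) (by fun_prop)

lemma eh_measurable : Measurable eh := by
  unfold eh
  exact measurable_norm.inv.smul rot_measurable.measurable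

lemma norm_rot (p : E2) : ‖rot p‖ = ‖p‖ := by
  have : ‖rot p‖ ^ 2 = ‖p‖ ^ 2 := by
    rw [norm_sq_E2, norm_sq_E2, rot_eq]; simp; ring
  exact (sq_eq_sq₀ (norm_nonneg _) (norm_nonneg _)).1 this

lemma eh_norm (p : E2) : ‖eh p‖ ≤ 1 := by
  unfold eh
  rw [norm_smul, norm_rot, norm_inv, norm_norm]
  exact inv_mul_le_one

lemma eh_norm_eq {p : E2} (hp : p ≠ 0) : ‖eh p‖ = 1 := by
  unfold eh
  rw [norm_smul, norm_rot, norm_inv, norm_norm]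
  exact inv_mul_cancel₀ (norm_ne_zero_iff.2 hp)

lemma eh_polar {s r : ℝ} (hr : 0 < r) : eh (polar s r) = vec (-sin s) (cos s) := by
  have hn : ‖polar s r‖ = r := by
    rw [polar, norm_smul, norm_vec_one (cos_sq_add_sin_sq s), Real.norm_eq_abs, abs_of_pos hr, mul_one]
  rw [eh, hn, rot_eq]
  apply E2_ext <;> simp [polar] <;> field_simp

lemma bounded_of_compact {w : E2 → E2} (hw : Continuous w) (hc : HasCompactSupport w) :
    ∃ C, ∀ p, ‖w p‖ ≤ C := hc.exists_bound_of_continuous hw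


lemma M_formula {g : ℝ → ℝ} (hg : MonotoneOn g (Icc 0 (π/2)))
    (hg01 : ∀ y ∈ Icc (0:ℝ) (π/2), g y ∈ Icc (0:ℝ) 1)
    {w : E2 → E2} (hw : ContDiff ℝ 1 w) (hc : HasCompactSupport w)
    (hs : tsupport w ⊆ Om) :
    ∫ p in Om, uf g p * div2 w p = - ∫ p, ⟪w p, eh p⟫ ∂(Mf g) := by
  obtain ⟨C, hC⟩ := bounded_of_compact hw.continuous hc
  rw [layer_cake hg hg01 (div_plane hw hc).1 (fun p hp => div2_zero fun h => hp (hs h)),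
    Mf_integral g (hw.continuous.measurable.inner eh_measurable) (C := C), ← integral_neg]
  · apply setIntegral_congr_fun measurableSet_Ioo
    intro t ht
    simp only
    rw [div_half (cos_sq_add_sin_sq (sf g t)) hw hc]
    congr 1
    rw [ray_int (F := fun p => ⟪w p, eh p⟫) _ (sf_nonneg g t) (sf_le g t)]
    · symm
      rw [← ray_int (F := fun p => ⟪w p, eh p⟫) _ (sf_nonneg g t) (sf_le g t)]
      · change _ = ∫ a, (fun p : E2 => w p 0 * -sin (sf g t) + w p 1 * cos (sf g t)) (polar (sf g t) a)
        rw [← ray_int (F := fun p : E2 => w p 0 * -sin (sf g t) + w p 1 * cos (sf g t)) _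
          (sf_nonneg g t) (sf_le g t)]
        · apply setIntegral_congr_fun measurableSet_Ioo
          intro r hr
          simp only
          rw [eh_polar hr.1, inner_E2]; simp
        · intro p hp
          have : w p = 0 := image_eq_zero_of_notMem_tsupport fun h => hp (hs h)
          simp [this]
      · intro p hp
        have : w p = 0 := image_eq_zero_of_notMem_tsupport fun h => hp (hs h)
        simp [this]
    · intro p hp
      have : w p = 0 := image_eq_zero_of_notMem_tsupport fun h => hp (hs h)
      simp [this]
  · intro p
    calc ‖⟪w p, eh p⟫‖ ≤ ‖w p‖ * ‖eh p‖ := norm_inner_le_norm _ _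
      _ ≤ C * 1 := mul_le_mul (hC p) (eh_norm p) (norm_nonneg _) ((norm_nonneg _).trans (hC p))
      _ = C := mul_one C

lemma M_phi {g : ℝ → ℝ} (hg : MonotoneOn g (Icc 0 (π/2)))
    (hg01 : ∀ y ∈ Icc (0:ℝ) (π/2), g y ∈ Icc (0:ℝ) 1) {ϕ : E2 → ℝ} (hϕ : ContDiff ℝ (⊤ : ℕ∞) ϕ)
    (hc : HasCompactSupport ϕ) (hs : tsupport ϕ ⊆ Om) :
    -∫ p in Om, uf g p * ⟪zf p, gradient ϕ p⟫ = ∫ p, ϕ p ∂(Mf g) := by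
  have hϕ2 : ContDiff ℝ 2 ϕ := contDiff_infty.1 hϕ 2
  have hϕ1 : ContDiff ℝ 1 ϕ := contDiff_infty.1 hϕ 1
  have hw := ws_contDiff hϕ2 hs
  have hwc := ws_compact hc
  have hws := (ws_tsupport ϕ).trans hs
  simp_rw [inner_gradient_E2]
  have e : ∫ p in Om, uf g p * fderiv ℝ ϕ p (zf p) = ∫ p in Om, uf g p * div2 (ws ϕ) p :=
    setIntegral_congr_fun isOpen_Om.measurableSet fun p hp => by
      rw [div_ws hϕ2 hp]
  rw [e, M_formula hg hg01 hw hwc hws, neg_neg]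
  obtain ⟨C, hC⟩ := bounded_of_compact hw.continuous hwc
  obtain ⟨C', hC'⟩ := hc.exists_bound_of_continuous hϕ1.continuous
  rw [Mf_integral g (hw.continuous.measurable.inner eh_measurable) (C := C),
    Mf_integral g hϕ1.continuous.measurable hC']
  · apply setIntegral_congr_fun measurableSet_Ioo
    intro t ht
    simp only
    set s := sf g t with hsdef
    have h0 : 0 ≤ s := sf_nonneg g t
    have h1 : s ≤ π / 2 := sf_le g t
    have hcs : 0 ≤ cos s := cos_nonneg_of_mem_Icc ⟨by linarith, h1⟩
    have hsn : 0 ≤ sin s := sin_nonneg_of_nonneg_of_le_pi h0 (by linarith [pi_pos])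
    have e1 : ∫ r in Ioo (0:ℝ) 2, ⟪ws ϕ (polar s r), eh (polar s r)⟫ =
        ∫ r in Ioo (0:ℝ) 2, -(fderiv ℝ ϕ (polar s r) (polar s r)) := by
      apply setIntegral_congr_fun measurableSet_Ioo
      intro r hr
      simp only
      rw [eh_polar hr.1, inner_E2, clm_E2 _ (polar s r)]
      have hpsi : psi (polar s r) = r := by
        simp only [psi, polar, PiLp.smul_apply, vec_zero, vec_one, smul_eq_mul]
        rw [max_eq_left (mul_nonneg hr.1.le hcs), max_eq_left (mul_nonneg hr.1.le hsn)]
        rw [show (r * cos s) ^ 2 + (r * sin s) ^ 2 = r ^ 2 by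
          linear_combination r ^ 2 * cos_sq_add_sin_sq s, Real.sqrt_sq hr.1.le]
      simp only [ws, hpsi, vec_zero, vec_one]
      simp [polar]
      ring
    rw [e1, ray_int (F := fun p => -(fderiv ℝ ϕ p p)) _ h0 h1, ray_int (F := ϕ) _ h0 h1]
    · have hu : ‖vec (cos s) (sin s)‖ = 1 := norm_vec_one (cos_sq_add_sin_sq s)
      have hp : ∀ r, polar s r = 0 + r • vec (cos s) (sin s) := by intro r; simp [polar]
      have hF1 := line_contDiff hϕ1 0 (vec (cos s) (sin s))
      have hF2 := line_compact hc 0 hu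
      simp_rw [hp]
      have hcont : Continuous (fun r : ℝ => fderiv ℝ ϕ (0 + r • vec (cos s) (sin s))
          (0 + r • vec (cos s) (sin s))) :=
        ((hϕ1.continuous_fderiv (by norm_num)).comp (by fun_prop)).clm_apply (by fun_prop)
      have hI1 : Integrable (fun r : ℝ => ϕ (0 + r • vec (cos s) (sin s))) :=
        hF1.continuous.integrable_of_hasCompactSupport hF2
      have hI2 : Integrable (fun r : ℝ => fderiv ℝ ϕ (0 + r • vec (cos s) (sin s))
          (0 + r • vec (cos s) (sin s))) := by
        apply hcont.integrable_of_hasCompactSupport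
        apply hF2.mono'
        intro r hr
        by_contra hh
        apply hr
        have h3 : (fun t : ℝ => ϕ (0 + t • vec (cos s) (sin s))) =ᶠ[𝓝 r] 0 :=
          notMem_tsupport_iff_eventuallyEq.1 hh
        have h4 := (line_deriv hϕ1 0 (vec (cos s) (sin s)) r).unique
          ((hasDerivAt_const r (0:ℝ)).congr_of_eventuallyEq h3)
        simp only [zero_add] at h4 ⊢
        rw [map_smul, h4, smul_zero]
      have hd : ∀ r : ℝ, HasDerivAt (fun r : ℝ => r * ϕ (0 + r • vec (cos s) (sin s)))
          (ϕ (0 + r • vec (cos s) (sin s)) + fderiv ℝ ϕ (0 + r • vec (cos s) (sin s))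
          (0 + r • vec (cos s) (sin s))) r := by
        intro r
        have := (hasDerivAt_id r).mul (line_deriv hϕ1 0 (vec (cos s) (sin s)) r)
        have e : fderiv ℝ ϕ (0 + r • vec (cos s) (sin s)) (0 + r • vec (cos s) (sin s)) =
            r * fderiv ℝ ϕ (0 + r • vec (cos s) (sin s)) (vec (cos s) (sin s)) := by
          conv_lhs => rw [zero_add, map_smul, smul_eq_mul]
          rw [zero_add]
        rw [e]
        refine this.congr_deriv ?_
        simp only [id, one_mul]
      have hI3 : Integrable (fun r : ℝ => r * ϕ (0 + r • vec (cos s) (sin s))) :=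
        (continuous_id.mul hF1.continuous).integrable_of_hasCompactSupport hF2.mul_left
      have := integral_eq_zero_of_hasDerivAt_of_integrable hd (hI1.add hI2) hI3
      rw [integral_add hI1 hI2] at this
      rw [integral_neg]; linarith
    · intro p hp
      exact image_eq_zero_of_notMem_tsupport fun h => hp (hs h)
    · intro p hp
      rw [fderiv_notMem fun h => hp (hs h)]; simp
  · intro p
    calc ‖⟪ws ϕ p, eh p⟫‖ ≤ ‖ws ϕ p‖ * ‖eh p‖ := norm_inner_le_norm _ _
      _ ≤ C * 1 := mul_le_mul (hC p) (eh_norm p) (norm_nonneg _) ((norm_nonneg _).trans (hC p))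
      _ = C := mul_one C

lemma exists_cutoff {K A : Set E2} (hK : IsCompact K) (hA : IsOpen A) (hKA : K ⊆ A) :
    ∃ ϕ : E2 → ℝ, ContDiff ℝ (⊤ : ℕ∞) ϕ ∧ HasCompactSupport ϕ ∧ tsupport ϕ ⊆ A ∧
      (∀ x, 0 ≤ ϕ x ∧ ϕ x ≤ 1) ∧ ∀ x ∈ K, ϕ x = 1 := by
  obtain ⟨L, hL, hKL, hLA⟩ := exists_compact_between hK hA hKA
  obtain ⟨f, h1, h2, h3, h4⟩ := exists_contMDiff_support_eq_eq_one_iff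
    (modelWithCornersSelf ℝ E2) (isOpen_interior (s := L)) hK.isClosed hKL
  have hsub : tsupport f ⊆ L := by
    apply closure_minimal _ hL.isClosed
    rw [h3]; exact interior_subset
  refine ⟨f, h1.contDiff, hL.of_isClosed_subset (isClosed_tsupport _) hsub, hsub.trans hLA, ?_, ?_⟩
  · intro x; exact h2 (mem_range_self x)
  · intro x hx; exact (h4 x).1 hx

lemma Om_bounded : Bornology.IsBounded Om := by
  apply (Metric.isBounded_ball (x := (0 : E2)) (r := 2)).subset
  intro p hp
  rw [mem_ball_E2 (by norm_num)]
  have := (Om_facts hp).2.2.2.1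
  simp; linarith

lemma le_of_compact {μ : Measure E2} {A : Set E2} (hA : IsOpen A) (hAO : A ⊆ Om) {C : ENNReal}
    (h : ∀ K, IsCompact K → K ⊆ A → μ K ≤ C) : μ A ≤ C := by
  obtain ⟨F, h1, h2, h3, h4⟩ := hA.exists_iUnion_isClosed
  rw [← h3, h4.measure_iUnion]
  refine iSup_le fun n => h _ ?_ (h2 n)
  exact Metric.isCompact_of_isClosed_isBounded (h1 n) (Om_bounded.subset ((h2 n).trans hAO))

lemma ext_Om {g : ℝ → ℝ} {μ : Measure E2} (h : ∀ A, IsOpen A → A ⊆ Om → μ A = Mf g A)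
    {A : Set E2} (hA : MeasurableSet A) (hAO : A ⊆ Om) : μ A = Mf g A := by
  have hfin : IsFiniteMeasure (μ.restrict Om) := ⟨by
    rw [Measure.restrict_apply_univ, h _ isOpen_Om subset_rfl]; exact measure_lt_top _ _⟩
  have : μ.restrict Om = (Mf g).restrict Om := by
    refine ext_of_generate_finite {s : Set E2 | IsOpen s} (BorelSpace.measurable_eq) ?_ ?_ ?_
    · intro s hs t ht _
      exact IsOpen.inter (show IsOpen s from hs) (show IsOpen t from ht)
    · intro s hs
      have hs : IsOpen s := hs
      rw [Measure.restrict_apply hs.measurableSet, Measure.restrict_apply hs.measurableSet,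
        h _ (hs.inter isOpen_Om) inter_subset_right]
    · rw [Measure.restrict_apply_univ, Measure.restrict_apply_univ, h _ isOpen_Om subset_rfl]
  have h2 := congrArg (fun ν => ν A) this
  simpa only [Measure.restrict_eq_self _ hAO] using h2

lemma cutoff_integrable {ϕ : E2 → ℝ} (hϕ : Continuous ϕ) (hc : HasCompactSupport ϕ) (g : ℝ → ℝ) :
    Integrable ϕ (Mf g) := hϕ.integrable_of_hasCompactSupport hc

lemma measure_le_integral {μ : Measure E2} {ϕ : E2 → ℝ} {K : Set E2} (hK : MeasurableSet K)
    (hi : Integrable ϕ μ) (h0 : ∀ x, 0 ≤ ϕ x) (h1 : ∀ x ∈ K, ϕ x = 1) :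
    μ K ≤ ENNReal.ofReal (∫ x, ϕ x ∂μ) := by
  rw [ofReal_integral_eq_lintegral_ofReal hi (Eventually.of_forall h0), ← lintegral_indicator_one hK]
  apply lintegral_mono
  intro x
  by_cases hx : x ∈ K
  · simp [hx, h1 x hx]
  · simp [hx]

lemma integral_le_measure {μ : Measure E2} {ϕ : E2 → ℝ} {A : Set E2} (hA : MeasurableSet A)
    (hi : Integrable ϕ μ) (h1 : ∀ x, ϕ x ≤ 1) (hA0 : ∀ x ∉ A, ϕ x ≤ 0) :
    ENNReal.ofReal (∫ x, ϕ x ∂μ) ≤ μ A := by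
  refine le_trans (ENNReal.ofReal_le_ofReal (integral_mono hi hi.pos_part fun x => le_max_left _ _)) ?_
  rw [ofReal_integral_eq_lintegral_ofReal hi.pos_part (Eventually.of_forall fun x => le_max_right _ _),
    ← lintegral_indicator_one hA]
  apply lintegral_mono
  intro x
  by_cases hx : x ∈ A
  · simp [hx, h1 x]
  · simp [hx, hA0 x hx]

lemma TV_open {g : ℝ → ℝ} (hg : MonotoneOn g (Icc 0 (π/2)))
    (hg01 : ∀ y ∈ Icc (0:ℝ) (π/2), g y ∈ Icc (0:ℝ) 1) {A : Set E2} (hA : IsOpen A) (hAO : A ⊆ Om) :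
    (⨆ w : {w : E2 → E2 // ContDiff ℝ 1 w ∧ HasCompactSupport w ∧
          tsupport w ⊆ A ∧ ∀ x, ‖w x‖ ≤ 1},
        ENNReal.ofReal (∫ x in A, uf g x * div2 w.1 x)) = Mf g A := by
  have key : ∀ w : E2 → E2, ContDiff ℝ 1 w → HasCompactSupport w → tsupport w ⊆ A →
      ∫ x in A, uf g x * div2 w x = ∫ p, -⟪w p, eh p⟫ ∂(Mf g) := by
    intro w h1 h2 h3
    rw [integral_neg, ← M_formula hg hg01 h1 h2 (h3.trans hAO)]
    have hz : ∀ p ∉ A, uf g p * div2 w p = 0 := fun p hp => by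
      rw [div2_zero fun h => hp (h3 h), mul_zero]
    rw [setIntegral_eq_integral_of_forall_compl_eq_zero hz,
      setIntegral_eq_integral_of_forall_compl_eq_zero fun p hp => hz p fun h => hp (hAO h)]
  have hInteg : ∀ w : E2 → E2, Continuous w → HasCompactSupport w →
      Integrable (fun p => -⟪w p, eh p⟫) (Mf g) := by
    intro w h1 h2
    obtain ⟨C, hC⟩ := bounded_of_compact h1 h2
    apply Integrable.neg
    apply Integrable.of_bound (C := C)
    · exact (h1.measurable.inner eh_measurable).aestronglyMeasurable
    · refine Eventually.of_forall fun p => ?_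
      calc ‖⟪w p, eh p⟫‖ ≤ ‖w p‖ * ‖eh p‖ := norm_inner_le_norm _ _
        _ ≤ C * 1 := mul_le_mul (hC p) (eh_norm p) (norm_nonneg _) ((norm_nonneg _).trans (hC p))
        _ = C := mul_one C
  apply le_antisymm
  · refine iSup_le ?_
    rintro ⟨w, h1, h2, h3, h4⟩
    simp only
    rw [key w h1 h2 h3]
    apply integral_le_measure hA.measurableSet (hInteg w h1.continuous h2)
    · intro x
      have := abs_real_inner_le_norm (w x) (eh x)
      have h5 : ‖w x‖ * ‖eh x‖ ≤ 1 := mul_le_one₀ (h4 x) (norm_nonneg _) (eh_norm x)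
      linarith [neg_abs_le ⟪w x, eh x⟫]
    · intro x hx
      have : w x = 0 := image_eq_zero_of_notMem_tsupport fun h => hx (h3 h)
      simp [this]
  · apply le_of_compact hA hAO
    intro K hK hKA
    obtain ⟨ϕ, h1, h2, h3, h4, h5⟩ := exists_cutoff hK hA hKA
    have hts : tsupport (fun p => (-ϕ p) • eh p) ⊆ tsupport ϕ := by
      apply closure_mono
      intro p hp h0
      apply hp
      simp only [h0, neg_zero, zero_smul]
    have hw1 : ContDiff ℝ 1 (fun p => (-ϕ p) • eh p) := by
      rw [contDiff_iff_contDiffAt]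
      intro p
      by_cases hp : p ∈ tsupport ϕ
      · have hp0 : p ≠ 0 := by rintro rfl; exact zero_notMem_Om (hAO (h3 hp))
        have hϕ1 : ContDiff ℝ 1 ϕ := contDiff_infty.1 h1 1
        refine hϕ1.neg.contDiffAt.smul ?_
        unfold eh
        refine ((contDiffAt_norm ℝ hp0).inv (norm_ne_zero_iff.2 hp0)).smul ?_
        have : rot = fun p => vec (-(p 1)) (p 0) := funext rot_eq
        rw [this]
        exact contDiffAt_vec (by fun_prop) (by fun_prop)
      · have : (fun p => (-ϕ p) • eh p) =ᶠ[𝓝 p] fun _ => 0 :=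
          notMem_tsupport_iff_eventuallyEq.1 fun h => hp (hts h)
        exact contDiffAt_const.congr_of_eventuallyEq this
    have hw2 : HasCompactSupport (fun p => (-ϕ p) • eh p) :=
      h2.of_isClosed_subset (isClosed_tsupport _) hts
    refine le_trans ?_ (le_iSup _ ⟨fun p => (-ϕ p) • eh p, hw1, hw2, hts.trans h3, ?_⟩)
    · simp only
      rw [key _ hw1 hw2 (hts.trans h3)]
      have : ∫ p, -⟪(-ϕ p) • eh p, eh p⟫ ∂(Mf g) = ∫ p, ϕ p ∂(Mf g) := by
        apply integral_congr_ae
        filter_upwards [Mf_ae g] with p hp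
        have hp0 : p ≠ 0 := by rintro rfl; exact zero_notMem_Om hp
        rw [inner_smul_left, real_inner_self_eq_norm_sq, eh_norm_eq hp0]
        simp
      rw [this]
      exact measure_le_integral hK.measurableSet (cutoff_integrable h1.continuous h2 g)
        (fun x => (h4 x).1) h5
    · intro x
      rw [norm_smul, norm_neg, Real.norm_eq_abs, abs_of_nonneg (h4 x).1]
      exact mul_le_one₀ (h4 x).2 (norm_nonneg _) (eh_norm x)

lemma pi_open {g : ℝ → ℝ} (hg : MonotoneOn g (Icc 0 (π/2)))
    (hg01 : ∀ y ∈ Icc (0:ℝ) (π/2), g y ∈ Icc (0:ℝ) 1) {πz : Measure E2}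
    (hπ : ∀ ϕ : E2 → ℝ, ContDiff ℝ (⊤ : ℕ∞) ϕ → HasCompactSupport ϕ → tsupport ϕ ⊆ Om →
      ∫ x, ϕ x ∂πz = -∫ x in Om, uf g x * ⟪zf x, gradient ϕ x⟫)
    {A : Set E2} (hA : IsOpen A) (hAO : A ⊆ Om) : πz A = Mf g A := by
  have hM : ∀ ϕ : E2 → ℝ, ContDiff ℝ (⊤ : ℕ∞) ϕ → HasCompactSupport ϕ → tsupport ϕ ⊆ Om →
      ∫ x, ϕ x ∂πz = ∫ x, ϕ x ∂(Mf g) := fun ϕ h1 h2 h3 => by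
    rw [hπ ϕ h1 h2 h3, M_phi hg hg01 h1 h2 h3]
  -- a test function with nonzero integral
  obtain ⟨ψ, hψ1, hψ2, hψ3, hψ4⟩ : ∃ ψ : E2 → ℝ, ContDiff ℝ (⊤ : ℕ∞) ψ ∧ HasCompactSupport ψ ∧
      tsupport ψ ⊆ Om ∧ ∫ x, ψ x ∂(Mf g) ≠ 0 := by
    by_contra! hcon
    apply Mf_Om g
    rw [← nonpos_iff_eq_zero]
    apply le_of_compact isOpen_Om subset_rfl
    intro K hK hKA
    obtain ⟨ϕ, h1, h2, h3, h4, h5⟩ := exists_cutoff hK isOpen_Om hKA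
    have := measure_le_integral hK.measurableSet (cutoff_integrable h1.continuous h2 g)
        (fun x => (h4 x).1) h5
    rwa [hcon ϕ h1 h2 h3, ENNReal.ofReal_zero] at this
  have hint0 : ∀ ϕ : E2 → ℝ, ContDiff ℝ (⊤ : ℕ∞) ϕ → HasCompactSupport ϕ → tsupport ϕ ⊆ Om →
      ∫ x, ϕ x ∂(Mf g) ≠ 0 → Integrable ϕ πz := by
    intro ϕ h1 h2 h3 h4
    by_contra hn
    rw [← hM ϕ h1 h2 h3, integral_undef hn] at h4
    exact h4 rfl
  have hInteg : ∀ ϕ : E2 → ℝ, ContDiff ℝ (⊤ : ℕ∞) ϕ → HasCompactSupport ϕ → tsupport ϕ ⊆ Om →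
      Integrable ϕ πz := by
    intro ϕ h1 h2 h3
    by_cases h4 : ∫ x, ϕ x ∂(Mf g) = 0
    · have h5 : Integrable (ϕ + ψ) πz := by
        apply hint0 _ (h1.add hψ1) (h2.add hψ2)
          ((tsupport_add ϕ ψ).trans (union_subset h3 hψ3))
        change ∫ x, (ϕ x + ψ x) ∂(Mf g) ≠ 0
        rw [integral_add (cutoff_integrable h1.continuous h2 g)
          (cutoff_integrable hψ1.continuous hψ2 g), h4, zero_add]
        exact hψ4
      have := h5.sub (hint0 ψ hψ1 hψ2 hψ3 hψ4)
      simpa using this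
    · exact hint0 ϕ h1 h2 h3 h4
  have hout : ∀ ϕ : E2 → ℝ, tsupport ϕ ⊆ A → ∀ x ∉ A, ϕ x ≤ 0 := fun ϕ h x hx =>
    (image_eq_zero_of_notMem_tsupport fun h' => hx (h h')).le
  apply le_antisymm
  · apply le_of_compact hA hAO
    intro K hK hKA
    obtain ⟨ϕ, h1, h2, h3, h4, h5⟩ := exists_cutoff hK hA hKA
    refine (measure_le_integral hK.measurableSet (hInteg ϕ h1 h2 (h3.trans hAO))
        (fun x => (h4 x).1) h5).trans ?_
    rw [hM ϕ h1 h2 (h3.trans hAO)]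
    exact integral_le_measure hA.measurableSet (cutoff_integrable h1.continuous h2 g)
      (fun x => (h4 x).2) (hout ϕ h3)
  · apply le_of_compact hA hAO
    intro K hK hKA
    obtain ⟨ϕ, h1, h2, h3, h4, h5⟩ := exists_cutoff hK hA hKA
    refine (measure_le_integral hK.measurableSet (cutoff_integrable h1.continuous h2 g)
        (fun x => (h4 x).1) h5).trans ?_
    rw [← hM ϕ h1 h2 (h3.trans hAO)]
    exact integral_le_measure hA.measurableSet (hInteg ϕ h1 h2 (h3.trans hAO))
      (fun x => (h4 x).2) (hout ϕ h3)

lemma zf_norm (p : E2) : ‖zf p‖ ≤ 1 := by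
  unfold zf
  split_ifs
  · simp
  · exact eh_norm p
  · simp

lemma zf_measurable : Measurable zf := by
  unfold zf
  refine Measurable.ite (measurableSet_lt theta_measurable measurable_const) measurable_const ?_
  refine Measurable.ite (measurableSet_le theta_measurable measurable_const) eh_measurable ?_
  exact measurable_const

lemma zf_quarter {p : E2} (h0 : 0 < p 0) (h1 : 0 < p 1) : zf p = ‖p‖⁻¹ • rot p := by
  unfold zf
  rw [if_neg, if_pos]
  · rw [theta_le_iff]; exact Or.inl h0.le
  · rw [theta_neg_iff]; linarith

lemma quarter_zero {v : E2 → ℝ} (hv : ContDiff ℝ (⊤ : ℕ∞) v) (hc : HasCompactSupport v)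
    (hs : tsupport v ⊆ {p : E2 | 0 < p 0 ∧ 0 < p 1}) :
    ∫ p in Om, ⟪zf p, gradient v p⟫ = 0 := by
  have hv1 : ContDiff ℝ 1 v := contDiff_infty.1 hv 1
  let c : ℕ → E2 → ℝ := fun n p => Real.smoothTransition (((n:ℝ) + 1) * (4 - (p 0 ^ 2 + p 1 ^ 2)) - 1)
  have hcs : ∀ n, ContDiff ℝ (⊤ : ℕ∞) (c n) := by
    intro n
    refine Real.smoothTransition.contDiff.comp ?_
    fun_prop
  have hz : ∀ n, ∫ p in Om, c n p * fderiv ℝ v p (zf p) = 0 := by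
    intro n
    have hts : tsupport (fun p => c n p * v p) ⊆ tsupport v := by
      apply closure_mono
      intro p hp h0
      apply hp
      simp [h0]
    have hts2 : tsupport (fun p => c n p * v p) ⊆ {p : E2 | p 0 ^ 2 + p 1 ^ 2 ≤ 4 - 1 / ((n:ℝ) + 1)} := by
      apply closure_minimal
      · intro p hp
        change p 0 ^ 2 + p 1 ^ 2 ≤ 4 - 1 / ((n:ℝ) + 1)
        by_contra! hlt
        apply hp
        have : c n p = 0 := by
          apply Real.smoothTransition.zero_of_nonpos
          have hn : (0:ℝ) < (n:ℝ) + 1 := by positivity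
          have h3 : 4 - (p 0 ^ 2 + p 1 ^ 2) ≤ 1 / ((n:ℝ) + 1) := by linarith
          have h4 := mul_le_mul_of_nonneg_left h3 hn.le
          rw [mul_one_div_cancel hn.ne'] at h4
          linarith
        simp [this]
      · exact isClosed_le (by fun_prop) (by fun_prop)
    have key := divfree_zf (fun p => c n p * v p) ((hcs n).mul hv) hc.mul_left (by
      intro p hp
      have h1 := hs (hts hp)
      have h2 : p 0 ^ 2 + p 1 ^ 2 ≤ 4 - 1 / ((n:ℝ) + 1) := hts2 hp
      have hn : (0:ℝ) < 1 / ((n:ℝ) + 1) := by positivity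
      exact Or.inl ⟨by linarith, h1.1, h1.2⟩)
    rw [← key]
    apply setIntegral_congr_fun isOpen_Om.measurableSet
    intro p hp
    change c n p * fderiv ℝ v p (zf p) = ⟪zf p, gradient (fun p => c n p * v p) p⟫
    rw [inner_gradient_E2]
    have hd1 : DifferentiableAt ℝ (c n) p := (hcs n).differentiable (by simp) p
    have hd2 : DifferentiableAt ℝ v p := hv.differentiable (by simp) p
    rw [fderiv_fun_mul hd1 hd2]
    simp only [ContinuousLinearMap.add_apply, ContinuousLinearMap.smul_apply, smul_eq_mul]
    by_cases hpv : p ∈ tsupport v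
    · have h1 := hs hpv
      have hperp : fderiv ℝ (c n) p (zf p) = 0 := by
        rw [zf_quarter h1.1 h1.2, map_smul, rot_eq]
        have hq : HasFDerivAt (fun p : E2 => ((n:ℝ) + 1) * (4 - (p 0 ^ 2 + p 1 ^ 2)) - 1)
            (fderiv ℝ (fun p : E2 => ((n:ℝ) + 1) * (4 - (p 0 ^ 2 + p 1 ^ 2)) - 1) p) p :=
          DifferentiableAt.hasFDerivAt (by fun_prop)
        have hst := (Real.smoothTransition.contDiff (n := 1)).differentiable (by simp)
          (((n:ℝ) + 1) * (4 - (p 0 ^ 2 + p 1 ^ 2)) - 1)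
        have := hst.hasDerivAt.comp_hasFDerivAt p hq
        have e : fderiv ℝ (c n) p = _ := this.fderiv
        rw [e]
        have hl := hq.hasLineDerivAt (vec (-(p 1)) (p 0))
        have e1 : ∀ i : Fin 2, HasDerivAt (fun t : ℝ => (p + t • vec (-(p 1)) (p 0)) i)
            (vec (-(p 1)) (p 0) i) 0 := by
          intro i
          simpa using ((hasDerivAt_id (0:ℝ)).mul_const (vec (-(p 1)) (p 0) i)).const_add (p i)
        have hl2 := (((((e1 0).pow 2).add ((e1 1).pow 2)).const_sub 4).const_mul ((n:ℝ)+1)).sub_const 1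
        have hz0 : fderiv ℝ (fun p : E2 => ((n:ℝ) + 1) * (4 - (p 0 ^ 2 + p 1 ^ 2)) - 1) p
            (vec (-(p 1)) (p 0)) = 0 := by
          have := HasDerivAt.unique hl hl2
          rw [this]
          simp
          right; ring
        simp [hz0]
      rw [hperp]; ring
    · rw [image_eq_zero_of_notMem_tsupport hpv]; simp
  simp_rw [inner_gradient_E2]
  have hInteg : Integrable (fun p => ‖fderiv ℝ v p‖) := by
    apply Integrable.norm
    exact (hv1.continuous_fderiv (by norm_num)).integrable_of_hasCompactSupport (hc.fderiv (𝕜 := ℝ))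
  have hlim : Tendsto (fun n => ∫ p in Om, c n p * fderiv ℝ v p (zf p)) atTop
      (𝓝 (∫ p in Om, fderiv ℝ v p (zf p))) := by
    apply tendsto_integral_of_dominated_convergence (fun p => ‖fderiv ℝ v p‖)
    · intro n
      apply Measurable.aestronglyMeasurable
      refine (hcs n).continuous.measurable.mul ?_
      simp_rw [← inner_gradient_E2]
      refine zf_measurable.inner ?_
      unfold gradient
      have := hv1.continuous_fderiv (by norm_num)
      exact ((InnerProductSpace.toDual ℝ E2).symm.continuous.comp this).measurable
    · exact hInteg.integrableOn
    · intro n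
      refine Eventually.of_forall fun p => ?_
      rw [norm_mul]
      calc _ ≤ 1 * (‖fderiv ℝ v p‖ * ‖zf p‖) := by
            refine mul_le_mul ?_ (ContinuousLinearMap.le_opNorm _ _) (norm_nonneg _) (by norm_num)
            rw [Real.norm_eq_abs, abs_of_nonneg (Real.smoothTransition.nonneg _)]
            exact Real.smoothTransition.le_one _
        _ ≤ 1 * (‖fderiv ℝ v p‖ * 1) := by gcongr; exact zf_norm p
        _ = _ := by ring
    · refine (ae_restrict_iff' isOpen_Om.measurableSet).2 (Eventually.of_forall fun p hp => ?_)
      have hlt := (Om_facts hp).2.2.2.1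
      apply tendsto_const_nhds.congr'
      obtain ⟨N, hN⟩ := exists_nat_gt (2 / (4 - (p 0 ^ 2 + p 1 ^ 2)))
      filter_upwards [eventually_ge_atTop N] with n hn
      have : c n p = 1 := by
        apply Real.smoothTransition.one_of_one_le
        have h4 : 0 < 4 - (p 0 ^ 2 + p 1 ^ 2) := by linarith
        rw [div_lt_iff₀ h4] at hN
        have : (N:ℝ) ≤ n := by exact_mod_cast hn
        nlinarith
      rw [this, one_mul]
  simp_rw [hz] at hlim
  exact tendsto_nhds_unique tendsto_const_nhds hlim |>.symm

noncomputable def Xf (b : ℝ) : ℝ := 2 - Real.sqrt (5 - (b - 1) ^ 2)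

lemma Xf_continuous : Continuous Xf := by unfold Xf; fun_prop

lemma Xf_neg {b : ℝ} (hb : b ∈ Ioo (0:ℝ) 2) : Xf b < 0 := by
  unfold Xf
  have : 2 < Real.sqrt (5 - (b - 1) ^ 2) := by
    apply Real.lt_sqrt_of_sq_lt
    nlinarith [hb.1, hb.2]
  linarith

lemma Xf_sq {b : ℝ} (hb : b ∈ Ioo (0:ℝ) 2) : (Xf b - 2) ^ 2 + (b - 1) ^ 2 = 5 := by
  unfold Xf
  have : 0 ≤ 5 - (b - 1) ^ 2 := by nlinarith [hb.1, hb.2]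
  have := Real.sq_sqrt this
  nlinarith

lemma Xf_iff {a b : ℝ} (ha : a < 0) : (a - 2) ^ 2 + (b - 1) ^ 2 < 5 ↔ b ∈ Ioo (0:ℝ) 2 ∧ Xf b < a := by
  constructor
  · intro h
    have hb : b ∈ Ioo (0:ℝ) 2 := ⟨by nlinarith, by nlinarith⟩
    refine ⟨hb, ?_⟩
    have h1 := Xf_sq hb
    have h2 := Xf_neg hb
    by_contra! h3
    nlinarith
  · rintro ⟨hb, h⟩
    have h1 := Xf_sq hb
    have h2 := Xf_neg hb
    nlinarith

/-- the two axis frames -/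
def ax (c d : ℝ) : Prop := (c = 1 ∧ d = 0) ∨ (c = 0 ∧ d = 1)

lemma ax_facts {c d : ℝ} (h : ax c d) : c ^ 2 + d ^ 2 = 1 ∧ d ^ 2 + c ^ 2 = 1 ∧ c * d + d * c = 0 := by
  rcases h with ⟨rfl, rfl⟩ | ⟨rfl, rfl⟩ <;> norm_num

lemma ax_mem {c d a b : ℝ} (h : ax c d) (ha : a < 0) :
    frame c d d c (a, b) ∈ Om ↔ b ∈ Ioo (0:ℝ) 2 ∧ Xf b < a := by
  rw [← Xf_iff ha, mem_Om]
  rcases h with ⟨rfl, rfl⟩ | ⟨rfl, rfl⟩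
  · simp only [frame, vec_zero, vec_one, mul_one, mul_zero, add_zero, zero_add]
    constructor
    · rintro (⟨_, h, _⟩ | ⟨h, _⟩ | ⟨h, h1⟩)
      · linarith
      · exact h
      · nlinarith
    · intro h; exact Or.inr (Or.inl ⟨h, ha.le⟩)
  · simp only [frame, vec_zero, vec_one, mul_one, mul_zero, add_zero, zero_add]
    constructor
    · rintro (⟨_, _, h⟩ | ⟨h, h1⟩ | ⟨h, h1⟩)
      · linarith
      · nlinarith
      · linarith
    · intro h; exact Or.inr (Or.inr ⟨by linarith, ha.le⟩)

lemma ax_coord {c d : ℝ} (h : ax c d) (a b : ℝ) :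
    frame c d d c (a, b) 0 * c + frame c d d c (a, b) 1 * d = a := by
  rcases h with ⟨rfl, rfl⟩ | ⟨rfl, rfl⟩ <;> simp [frame]

lemma ax_line {c d : ℝ} (a b : ℝ) :
    frame c d d c (a, b) = b • vec d c + a • vec c d := by
  rw [frame, vec_lin, add_comm]

lemma cap_frame {c d : ℝ} (h : ax c d) {v : E2 → ℝ} (hv : ContDiff ℝ 1 v) (hc : HasCompactSupport v)
    (hs : tsupport v ⊆ {p : E2 | p 0 * c + p 1 * d < 0}) :
    ∫ p in Om, fderiv ℝ v p (vec c d) = - ∫ b in Ioo (0:ℝ) 2, v (frame c d d c (Xf b, b)) := by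
  obtain ⟨h1, h2, h3⟩ := ax_facts h
  rw [← integral_indicator isOpen_Om.measurableSet, frame_integral h1 h2 h3]
  have hInteg := frame_integrable h1 h2 h3
    ((fderiv_integrable hv hc (vec c d)).indicator isOpen_Om.measurableSet)
  rw [Measure.volume_eq_prod] at hInteg ⊢
  rw [integral_prod_symm _ hInteg, ← integral_neg, ← integral_indicator measurableSet_Ioo]
  congr 1
  funext b
  have hz : ∀ a : ℝ, 0 ≤ a → fderiv ℝ v (frame c d d c (a, b)) = 0 := by
    intro a ha
    apply fderiv_notMem
    intro hm
    have : frame c d d c (a, b) 0 * c + frame c d d c (a, b) 1 * d < 0 := hs hm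
    rw [ax_coord h] at this
    linarith
  by_cases hb : b ∈ Ioo (0:ℝ) 2
  · rw [indicator_of_mem hb]
    have e : (fun a : ℝ => Om.indicator (fun p => fderiv ℝ v p (vec c d)) (frame c d d c (a, b))) =
        (Ioi (Xf b)).indicator (fun a => fderiv ℝ v (b • vec d c + a • vec c d) (vec c d)) := by
      funext a
      by_cases ha : a < 0
      · by_cases hX : Xf b < a
        · rw [indicator_of_mem ((ax_mem h ha).2 ⟨hb, hX⟩), indicator_of_mem (show a ∈ Ioi (Xf b) from hX)]
          rw [ax_line]
        · rw [indicator_of_notMem fun hh => hX ((ax_mem h ha).1 hh).2, indicator_of_notMem (show a ∉ Ioi (Xf b) from hX)]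
      · have := hz a (not_lt.1 ha)
        simp only [indicator, ← ax_line, this]
        simp
    rw [e, integral_indicator measurableSet_Ioi, line_int_Ioi hv hc _ (norm_vec_one h1), ax_line]
  · rw [indicator_of_notMem hb]
    rw [← integral_zero ℝ ℝ]
    congr 1
    funext a
    by_cases ha : a < 0
    · rw [indicator_of_notMem fun hh => hb ((ax_mem h ha).1 hh).1]
    · have := hz a (not_lt.1 ha)
      simp only [indicator, this]
      simp

lemma zf_left {p : E2} (hp : p ∈ Om) (h : p 0 < 0) : zf p = -vec 1 0 := by
  have h1 := (Om_facts hp).2.1 h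
  unfold zf
  rw [if_neg, if_neg, single_zero_eq]
  · apply E2_ext <;> simp
  · rw [theta_le_iff]; push Not; exact ⟨h, h1.le⟩
  · rw [theta_neg_iff]; linarith

lemma zf_low {p : E2} (h : p 1 < 0) : zf p = vec 0 1 := by
  unfold zf
  rw [if_pos ((theta_neg_iff p).2 h), single_one_eq]

lemma cap_left {v : E2 → ℝ} (hv : ContDiff ℝ 1 v) (hc : HasCompactSupport v)
    (hs : tsupport v ⊆ {p : E2 | p 0 * 1 + p 1 * 0 < 0}) :
    ∫ p in Om, ⟪zf p, gradient v p⟫ = ∫ b in Ioo (0:ℝ) 2, v (frame 1 0 0 1 (Xf b, b)) := by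
  have := cap_frame (Or.inl ⟨rfl, rfl⟩) hv hc hs
  rw [← neg_inj, ← this, ← integral_neg]
  apply setIntegral_congr_fun isOpen_Om.measurableSet
  intro p hp
  change -⟪zf p, gradient v p⟫ = fderiv ℝ v p (vec 1 0)
  rw [inner_gradient_E2]
  by_cases hpv : p ∈ tsupport v
  · have h0 : p 0 * 1 + p 1 * 0 < 0 := hs hpv
    rw [zf_left hp (by linarith), map_neg, neg_neg]
  · rw [fderiv_notMem hpv]; simp

lemma cap_low {v : E2 → ℝ} (hv : ContDiff ℝ 1 v) (hc : HasCompactSupport v)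
    (hs : tsupport v ⊆ {p : E2 | p 0 * 0 + p 1 * 1 < 0}) :
    ∫ p in Om, ⟪zf p, gradient v p⟫ = -∫ b in Ioo (0:ℝ) 2, v (frame 0 1 1 0 (Xf b, b)) := by
  rw [← cap_frame (Or.inr ⟨rfl, rfl⟩) hv hc hs]
  apply setIntegral_congr_fun isOpen_Om.measurableSet
  intro p hp
  change ⟪zf p, gradient v p⟫ = fderiv ℝ v p (vec 0 1)
  rw [inner_gradient_E2]
  by_cases hpv : p ∈ tsupport v
  · have h0 : p 0 * 0 + p 1 * 1 < 0 := hs hpv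
    rw [zf_low (by linarith)]
  · rw [fderiv_notMem hpv]; simp

/-- the parametrisation measure of the cap arc -/
noncomputable def capM (c d : ℝ) : Measure E2 :=
  (volume.restrict (Ioo (0:ℝ) 2)).map fun b => frame c d d c (Xf b, b)

lemma cap_meas (c d : ℝ) : Measurable fun b => frame c d d c (Xf b, b) :=
  ((frame_continuous c d d c).comp (Xf_continuous.prodMk continuous_id)).measurable

instance (c d : ℝ) : IsFiniteMeasure (capM c d) := by unfold capM; infer_instance

lemma cap_closure {c d : ℝ} (h : ax c d) {b : ℝ} (hb : b ∈ Ioo (0:ℝ) 2) :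
    frame c d d c (Xf b, b) ∈ frontier Om := by
  rw [isOpen_Om.frontier_eq]
  refine ⟨?_, fun hm => ?_⟩
  · have hcont : Tendsto (fun a : ℝ => frame c d d c (a, b)) (𝓝[>] (Xf b)) (𝓝 (frame c d d c (Xf b, b))) :=
      (((frame_continuous c d d c).comp (continuous_id.prodMk continuous_const)).tendsto _).mono_left
        nhdsWithin_le_nhds
    apply mem_closure_of_tendsto hcont
    filter_upwards [Ioo_mem_nhdsGT (Xf_neg hb)] with a ha
    exact (ax_mem h ha.2).2 ⟨hb, ha.1⟩
  · exact lt_irrefl _ ((ax_mem h (Xf_neg hb)).1 hm).2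

lemma capM_le {c d : ℝ} (h : ax c d) : capM c d ≤ (μH[1]).restrict (frontier Om) := by
  rw [Measure.le_iff]
  intro s hs
  rw [capM, Measure.map_apply (cap_meas c d) hs, Measure.restrict_apply ((cap_meas c d) hs),
    Measure.restrict_apply hs]
  have hlip : LipschitzWith 1 (fun p : E2 => p 0 * d + p 1 * c) := by
    rcases h with ⟨rfl, rfl⟩ | ⟨rfl, rfl⟩
    · simpa using (EuclideanSpace.proj (1 : Fin 2) : E2 →L[ℝ] ℝ).lipschitz.weaken (by
        refine ContinuousLinearMap.opNNNorm_le_bound _ _ fun x => ?_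
        rw [one_mul]
        exact PiLp.nnnorm_apply_le x 1)
    · simpa using (EuclideanSpace.proj (0 : Fin 2) : E2 →L[ℝ] ℝ).lipschitz.weaken (by
        refine ContinuousLinearMap.opNNNorm_le_bound _ _ fun x => ?_
        rw [one_mul]
        exact PiLp.nnnorm_apply_le x 0)
  have hi := hlip.hausdorffMeasure_image_le (d := 1) (by norm_num) (s ∩ frontier Om)
  rw [hausdorffMeasure_real] at hi
  refine le_trans (measure_mono ?_) (hi.trans (by simp))
  rintro b ⟨hb1, hb2⟩
  refine ⟨frame c d d c (Xf b, b), ⟨hb1, cap_closure h hb2⟩, ?_⟩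
  rcases h with ⟨rfl, rfl⟩ | ⟨rfl, rfl⟩ <;> simp [frame]

lemma closure_facts {p : E2} (hp : p ∈ closure Om) :
    (p 0 ^ 2 + p 1 ^ 2 ≤ 4 ∧ 0 ≤ p 0 ∧ 0 ≤ p 1) ∨
    ((p 0 - 2) ^ 2 + (p 1 - 1) ^ 2 ≤ 5 ∧ p 0 ≤ 0) ∨
    ((p 0 - 1) ^ 2 + (p 1 - 2) ^ 2 ≤ 5 ∧ p 1 ≤ 0) := by
  have hcl : IsClosed ({p : E2 | p 0 ^ 2 + p 1 ^ 2 ≤ 4 ∧ 0 ≤ p 0 ∧ 0 ≤ p 1} ∪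
    ({p : E2 | (p 0 - 2) ^ 2 + (p 1 - 1) ^ 2 ≤ 5 ∧ p 0 ≤ 0} ∪
    {p : E2 | (p 0 - 1) ^ 2 + (p 1 - 2) ^ 2 ≤ 5 ∧ p 1 ≤ 0})) := by
    refine IsClosed.union ?_ (IsClosed.union ?_ ?_)
    · exact IsClosed.and (isClosed_le (by fun_prop) (by fun_prop))
        (IsClosed.and (isClosed_le (by fun_prop) (by fun_prop)) (isClosed_le (by fun_prop) (by fun_prop)))
    · exact IsClosed.and (isClosed_le (by fun_prop) (by fun_prop)) (isClosed_le (by fun_prop) (by fun_prop))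
    · exact IsClosed.and (isClosed_le (by fun_prop) (by fun_prop)) (isClosed_le (by fun_prop) (by fun_prop))
  refine closure_minimal ?_ hcl hp
  intro q hq
  rcases mem_Om.1 hq with ⟨h, h0, h1⟩ | ⟨h, h0⟩ | ⟨h, h0⟩
  · exact Or.inl ⟨h.le, h0.le, h1.le⟩
  · exact Or.inr (Or.inl ⟨h.le, h0⟩)
  · exact Or.inr (Or.inr ⟨h.le, h0⟩)

lemma frontier_facts {p : E2} (hp : p ∈ frontier Om) :
    (p 0 ^ 2 + p 1 ^ 2 = 4 ∧ 0 ≤ p 0 ∧ 0 ≤ p 1) ∨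
    ((p 0 - 2) ^ 2 + (p 1 - 1) ^ 2 = 5 ∧ p 0 ≤ 0) ∨
    ((p 0 - 1) ^ 2 + (p 1 - 2) ^ 2 = 5 ∧ p 1 ≤ 0) := by
  rw [isOpen_Om.frontier_eq] at hp
  obtain ⟨hc, hn⟩ := hp
  rw [mem_Om] at hn
  push Not at hn
  obtain ⟨n1, n2, n3⟩ := hn
  rcases closure_facts hc with ⟨h, h0, h1⟩ | ⟨h, h0⟩ | ⟨h, h0⟩
  · rcases h.eq_or_lt with h | h
    · exact Or.inl ⟨h, h0, h1⟩
    rcases h0.eq_or_lt with e0 | h0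
    · right; left
      refine ⟨?_, e0.symm.le⟩
      apply le_antisymm
      · rw [← e0] at h ⊢
        nlinarith
      · by_contra! hh
        linarith [n2 hh]
    · rcases h1.eq_or_lt with e1 | h1
      · right; right
        refine ⟨?_, e1.symm.le⟩
        apply le_antisymm
        · rw [← e1] at h ⊢
          nlinarith
        · by_contra! hh
          linarith [n3 hh]
      · linarith [n1 h h0]
  · refine Or.inr (Or.inl ⟨le_antisymm h ?_, h0⟩)
    by_contra! hh
    linarith [n2 hh]
  · refine Or.inr (Or.inr ⟨le_antisymm h ?_, h0⟩)
    by_contra! hh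
    linarith [n3 hh]

lemma cap_bd {a b : ℝ} (h : (a - 2) ^ 2 + (b - 1) ^ 2 = 5) (ha : a ≤ 0) :
    0 ≤ b ∧ b ≤ 2 ∧ -2 ≤ a := ⟨by nlinarith, by nlinarith, by nlinarith⟩

lemma circle_finite (c0 c1 R : ℝ) (hR : 0 ≤ R) :
    μH[1] {p : E2 | (p 0 - c0) ^ 2 + (p 1 - c1) ^ 2 = R ^ 2} < ⊤ := by
  let γ : ℝ → E2 := fun t => vec (c0 + R * cos t) (c1 + R * sin t)
  have hγ : ContDiff ℝ 1 γ := by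
    rw [contDiff_euclidean]
    intro i
    fin_cases i
    · simp [γ]; fun_prop
    · simp [γ]; fun_prop
  obtain ⟨K, hK⟩ := (hγ.contDiffOn (s := Icc (-π) π)).exists_lipschitzOnWith (by norm_num)
    (convex_Icc _ _) isCompact_Icc
  have hi := hK.hausdorffMeasure_image_le (d := 1) (by norm_num)
  refine lt_of_le_of_lt (measure_mono ?_) (lt_of_le_of_lt hi ?_)
  · intro p hp
    have hp : (p 0 - c0) ^ 2 + (p 1 - c1) ^ 2 = R ^ 2 := hp
    obtain ⟨h0, h1⟩ := theta_coord (p - vec c0 c1)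
    have hn : ‖p - vec c0 c1‖ = R := by
      refine (sq_eq_sq₀ (norm_nonneg _) hR).1 ?_
      rw [norm_sq_E2]; simpa using hp
    rw [hn] at h0 h1
    simp at h0 h1
    refine ⟨theta (p - vec c0 c1), ⟨(Complex.neg_pi_lt_arg _).le, Complex.arg_le_pi _⟩, ?_⟩
    apply E2_ext
    · simp [γ, ← h0]
    · simp [γ, ← h1]
  · rw [hausdorffMeasure_real]
    simp [ENNReal.mul_lt_top_iff]

noncomputable def sg : Measure E2 := (μH[1]).restrict (frontier Om)

instance sg_finite : IsFiniteMeasure sg := by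
  refine ⟨?_⟩
  rw [sg, Measure.restrict_apply_univ]
  have h1 := circle_finite 0 0 2 (by norm_num)
  have h2 := circle_finite 2 1 (Real.sqrt 5) (Real.sqrt_nonneg _)
  have h3 := circle_finite 1 2 (Real.sqrt 5) (Real.sqrt_nonneg _)
  rw [Real.sq_sqrt (by norm_num)] at h2 h3
  refine lt_of_le_of_lt (measure_mono ?_) (measure_union_lt_top h1 (measure_union_lt_top h2 h3))
  intro p hp
  rcases frontier_facts hp with ⟨h, _⟩ | ⟨h, _⟩ | ⟨h, _⟩
  · left
    change (p 0 - 0) ^ 2 + (p 1 - 0) ^ 2 = 2 ^ 2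
    rw [sub_zero, sub_zero, h]; norm_num
  · right; left; exact h
  · right; right; exact h

lemma sg_point (p : E2) : ∀ᵐ x ∂sg, x ≠ p := by
  have : sg {p} = 0 := by
    rw [← nonpos_iff_eq_zero]
    refine (Measure.restrict_apply_le _ _).trans ?_
    have := Measure.nullSingletonClass_hausdorff E2 (d := 1) (by norm_num)
    rw [measure_singleton]
  rw [ae_iff]
  simpa using this

lemma sg_frontier : ∀ᵐ x ∂sg, x ∈ frontier Om := ae_restrict_mem isClosed_frontier.measurableSet

lemma frontier_p0 {p : E2} (hp : p ∈ frontier Om) : p 0 ≤ 3 := by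
  rcases frontier_facts hp with ⟨h, _⟩ | ⟨h, h0⟩ | ⟨h, h0⟩
  · nlinarith
  · linarith
  · have := cap_bd (a := p 1) (b := p 0) (by linarith) h0
    linarith [this.2.1]

lemma ntz_integrable {ntz : E2 → ℝ} (hntz : ∀ v : E2 → ℝ, ContDiff ℝ 1 v →
      ∫ x in Om, ⟪zf x, gradient v x⟫ = ∫ x, ntz x * v x ∂sg) : Integrable ntz sg := by
  have hv : ContDiff ℝ 1 (fun p : E2 => 5 - p 0) := by fun_prop
  have hgrad : ∀ p, ⟪zf p, gradient (fun p : E2 => 5 - p 0) p⟫ = -(zf p 0) := by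
    intro p
    rw [inner_gradient_E2, fderiv_const_sub]
    have := (EuclideanSpace.proj (0 : Fin 2) : E2 →L[ℝ] ℝ).fderiv (x := p)
    change (-(fderiv ℝ (EuclideanSpace.proj (0 : Fin 2) : E2 →L[ℝ] ℝ) p)) (zf p) = _
    rw [this]
    simp
  have key := hntz _ hv
  simp_rw [hgrad] at key
  have hpos : 0 < ∫ x in Om, -(zf x 0) := by
    rw [setIntegral_pos_iff_support_of_nonneg_ae]
    · have hO : IsOpen {p : E2 | p 0 ^ 2 + p 1 ^ 2 < 4 ∧ 0 < p 0 ∧ 0 < p 1} :=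
        IsOpen.and (isOpen_lt (by fun_prop) (by fun_prop))
          (IsOpen.and (isOpen_lt (by fun_prop) (by fun_prop)) (isOpen_lt (by fun_prop) (by fun_prop)))
      refine lt_of_lt_of_le (hO.measure_pos volume ⟨vec 1 1, ?_⟩) (measure_mono ?_)
      · change vec 1 1 0 ^ 2 + vec 1 1 1 ^ 2 < 4 ∧ 0 < vec 1 1 0 ∧ 0 < vec 1 1 1
        norm_num
      · rintro p ⟨h1, h2, h3⟩
        have hO : p ∈ Om := Or.inl ⟨h1, h2, h3⟩
        refine ⟨?_, hO⟩
        have hn := norm_pos_Om hO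
        rw [Function.mem_support, zf_quarter h2 h3, rot_eq]
        simp [h3.ne', hn.ne']
    · refine (ae_restrict_iff' isOpen_Om.measurableSet).2 (Eventually.of_forall fun p hp => ?_)
      change 0 ≤ -(zf p 0)
      rw [zf_eq hp, vec_zero, neg_neg]
      exact div_nonneg (le_max_right _ _) (Real.sqrt_nonneg _)
    · have : IsFiniteMeasure (volume.restrict Om) := ⟨by
        rw [Measure.restrict_apply_univ]; exact Om_bounded.measure_lt_top⟩
      apply Integrable.of_bound (C := 1)
      · exact (((EuclideanSpace.proj (0 : Fin 2) : E2 →L[ℝ] ℝ).continuous.measurable.comp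
          zf_measurable).neg).aestronglyMeasurable
      · refine Eventually.of_forall fun p => ?_
        rw [norm_neg]
        exact (PiLp.norm_apply_le (zf p) 0).trans (zf_norm p)
  have hi : Integrable (fun x => ntz x * (5 - x 0)) sg := by
    by_contra hn
    rw [integral_undef hn] at key
    linarith
  have hb := hi.mul_bdd (g := fun x : E2 => (5 - x 0)⁻¹) (c := 1)
    (Measurable.aestronglyMeasurable (by
      refine Measurable.inv ?_
      exact (by fun_prop : Continuous fun x : E2 => 5 - x 0).measurable))
    (by
      filter_upwards [sg_frontier] with p hp
      have := frontier_p0 hp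
      rw [norm_inv, Real.norm_eq_abs, abs_of_pos (by linarith)]
      exact inv_le_one_of_one_le₀ (by linarith))
  refine hb.congr ?_
  filter_upwards [sg_frontier] with p hp
  have := frontier_p0 hp
  field_simp [show (5 - p 0) ≠ 0 by linarith]

lemma density {ntz : E2 → ℝ} (hi : Integrable ntz sg) {U : Set E2} (hU : IsOpen U) (m : Measure E2)
    [IsFiniteMeasure m] (hm : m ≤ sg) (s : ℝ)
    (h : ∀ v : E2 → ℝ, ContDiff ℝ (⊤ : ℕ∞) v → HasCompactSupport v → tsupport v ⊆ U →
      ∫ x, ntz x * v x ∂sg = s * ∫ x, v x ∂m) :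
    ∀ᵐ x ∂sg, x ∈ U → |ntz x| ≤ |s| := by
  have : m.HaveLebesgueDecomposition sg := Measure.haveLebesgueDecomposition_of_sigmaFinite m sg
  have hac : m ≪ sg := Measure.absolutelyContinuous_of_le hm
  have hρ : Integrable (fun x => (m.rnDeriv sg x).toReal) sg := Measure.integrable_toReal_rnDeriv
  have hf : Integrable (fun x => ntz x - s * (m.rnDeriv sg x).toReal) sg := hi.sub (hρ.const_mul s)
  have key := hU.ae_eq_zero_of_integral_contDiff_smul_eq_zero
    (hf.locallyIntegrable.locallyIntegrableOn U) (by
      intro v h1 h2 h3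
      have hb := h2.exists_bound_of_continuous h1.continuous
      obtain ⟨C, hC⟩ := hb
      have hI1 : Integrable (fun x => ntz x * v x) sg :=
        hi.mul_bdd h1.continuous.aestronglyMeasurable (Eventually.of_forall hC)
      have hI2 : Integrable (fun x => (m.rnDeriv sg x).toReal * v x) sg :=
        hρ.mul_bdd h1.continuous.aestronglyMeasurable (Eventually.of_forall hC)
      have e : ∀ x, v x • (ntz x - s * (m.rnDeriv sg x).toReal) =
          ntz x * v x - s * ((m.rnDeriv sg x).toReal * v x) := by intro x; simp; ring
      simp_rw [e]
      rw [integral_sub hI1 (hI2.const_mul s), h v h1 h2 h3, integral_const_mul]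
      have := integral_rnDeriv_smul (f := v) hac
      simp only [smul_eq_mul] at this
      rw [this, sub_self])
  filter_upwards [key, Measure.rnDeriv_le_one_of_le hm] with x hx h1 hxU
  have h2 := hx hxU
  have h3 : (m.rnDeriv sg x).toReal ≤ 1 := by
    have := ENNReal.toReal_mono (by simp) h1
    simpa using this
  have h4 : ntz x = s * (m.rnDeriv sg x).toReal := by linarith
  rw [h4, abs_mul, abs_of_nonneg ENNReal.toReal_nonneg]
  exact mul_le_of_le_one_right (abs_nonneg _) h3

lemma trace_val {w : E2 → ℝ} {p : E2} (hp : p ∈ closure Om) {V : Set E2} (hV : IsOpen V) (hpV : p ∈ V)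
    {k T : ℝ} (hw : ∀ y ∈ V, y ∈ Om → w y = k)
    (hT : Tendsto (fun r => (∫ y in Metric.ball p r ∩ Om, |w y - T|) /
        (volume (Metric.ball p r ∩ Om)).toReal) (nhdsWithin 0 (Ioi 0)) (nhds 0)) : T = k := by
  obtain ⟨ε, hε, hb⟩ := Metric.isOpen_iff.1 hV p hpV
  have hc : Tendsto (fun r => (∫ y in Metric.ball p r ∩ Om, |w y - T|) /
        (volume (Metric.ball p r ∩ Om)).toReal) (nhdsWithin 0 (Ioi 0)) (nhds |k - T|) := by
    apply tendsto_const_nhds.congr'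
    filter_upwards [Ioo_mem_nhdsGT hε] with r hr
    have hO : IsOpen (Metric.ball p r ∩ Om) := Metric.isOpen_ball.inter isOpen_Om
    have e : ∫ y in Metric.ball p r ∩ Om, |w y - T| = ∫ y in Metric.ball p r ∩ Om, |k - T| := by
      apply setIntegral_congr_fun hO.measurableSet
      intro y hy
      change |w y - T| = |k - T|
      rw [hw y (hb (Metric.ball_subset_ball hr.2.le hy.1)) hy.2]
    have hne : (Metric.ball p r ∩ Om).Nonempty := by
      rw [Metric.mem_closure_iff] at hp
      obtain ⟨q, hq, hd⟩ := hp r hr.1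
      exact ⟨q, by rw [Metric.mem_ball, dist_comm]; exact hd, hq⟩
    have h1 : 0 < volume (Metric.ball p r ∩ Om) := hO.measure_pos volume hne
    have h2 : volume (Metric.ball p r ∩ Om) < ⊤ :=
      (Om_bounded.subset inter_subset_right).measure_lt_top
    have h3 : 0 < (volume (Metric.ball p r ∩ Om)).toReal := ENNReal.toReal_pos h1.ne' h2.ne
    rw [e, setIntegral_const, smul_eq_mul, measureReal_def, mul_comm, mul_div_assoc, div_self h3.ne', mul_one]
  have := tendsto_nhds_unique hT hc
  have := abs_eq_zero.1 this.symm
  linarith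

lemma uf_left (g : ℝ → ℝ) {p : E2} (hp : p ∈ Om) (h : p 0 < 0) : uf g p = 1 := by
  have h1 := (Om_facts hp).2.1 h
  unfold uf
  rw [if_neg, if_neg]
  · rw [theta_le_iff]; push Not; exact ⟨h, h1.le⟩
  · rw [theta_neg_iff]; linarith

lemma uf_low (g : ℝ → ℝ) {p : E2} (h : p 1 < 0) : uf g p = 0 := by
  unfold uf
  rw [if_pos ((theta_neg_iff p).2 h)]

lemma off_gamma {p : E2} (hp : p ∈ frontier Om) (h : ¬ p 0 * p 1 < 0) (h0 : p ≠ 0) :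
    (0 < p 0 ∧ 0 < p 1) ∨ p = vec 2 0 ∨ p = vec 0 2 := by
  have aux : ∀ a b : ℝ, (a - 2) ^ 2 + (b - 1) ^ 2 = 5 → a ≤ 0 → 0 ≤ a * b →
      a = 0 ∧ (b = 0 ∨ b = 2) := by
    intro a b h1 h2 h3
    obtain ⟨c1, c2, c3⟩ := cap_bd h1 h2
    have ha : a = 0 := by
      by_contra hne
      have hlt : a < 0 := lt_of_le_of_ne h2 hne
      have hb : b = 0 := by nlinarith
      subst hb
      nlinarith
    subst ha
    refine ⟨rfl, ?_⟩
    have : b * (b - 2) = 0 := by nlinarith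
    rcases mul_eq_zero.1 this with h | h
    · exact Or.inl h
    · right; linarith
  have hne : ¬ (p 0 = 0 ∧ p 1 = 0) := fun hh => h0 (E2_ext (by simpa using hh.1) (by simpa using hh.2))
  push Not at h
  rcases frontier_facts hp with ⟨h1, h2, h3⟩ | ⟨h1, h2⟩ | ⟨h1, h2⟩
  · rcases h2.eq_or_lt with e | h2
    · right; right
      apply E2_ext
      · simp [← e]
      · rw [← e] at h1
        rw [vec_one]
        nlinarith
    · rcases h3.eq_or_lt with e | h3
      · right; left
        apply E2_ext
        · rw [← e] at h1
          rw [vec_zero]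
          nlinarith
        · simp [← e]
      · exact Or.inl ⟨h2, h3⟩
  · obtain ⟨e0, e1 | e1⟩ := aux _ _ h1 h2 h
    · exact absurd ⟨e0, e1⟩ hne
    · right; right; apply E2_ext <;> simp [e0, e1]
  · obtain ⟨e0, e1 | e1⟩ := aux (p 1) (p 0) (by linarith) h2 (by linarith)
    · exact absurd ⟨e1, e0⟩ hne
    · right; left; apply E2_ext <;> simp [e0, e1]

lemma ntz_quarter {ntz : E2 → ℝ} (hntz : ∀ v : E2 → ℝ, ContDiff ℝ 1 v →
      ∫ x in Om, ⟪zf x, gradient v x⟫ = ∫ x, ntz x * v x ∂sg) :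
    ∀ᵐ x ∂sg, (0 < x 0 ∧ 0 < x 1) → ntz x = 0 := by
  have hU : IsOpen {p : E2 | 0 < p 0 ∧ 0 < p 1} :=
    IsOpen.and (isOpen_lt (by fun_prop) (by fun_prop)) (isOpen_lt (by fun_prop) (by fun_prop))
  have := density (ntz_integrable hntz) hU 0 (Measure.zero_le _) 0 (by
    intro v h1 h2 h3
    rw [← hntz v (contDiff_infty.1 h1 1), quarter_zero h1 h2 h3, zero_mul])
  filter_upwards [this] with x hx hxU
  have := hx hxU
  rw [abs_zero] at this
  exact abs_eq_zero.1 (le_antisymm this (abs_nonneg _))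

lemma ntz_left {ntz : E2 → ℝ} (hntz : ∀ v : E2 → ℝ, ContDiff ℝ 1 v →
      ∫ x in Om, ⟪zf x, gradient v x⟫ = ∫ x, ntz x * v x ∂sg) :
    ∀ᵐ x ∂sg, x 0 < 0 → |ntz x| ≤ 1 := by
  have hU : IsOpen {p : E2 | p 0 * 1 + p 1 * 0 < 0} := isOpen_lt (by fun_prop) (by fun_prop)
  have := density (ntz_integrable hntz) hU (capM 1 0) (capM_le (Or.inl ⟨rfl, rfl⟩)) 1 (by
    intro v h1 h2 h3
    rw [← hntz v (contDiff_infty.1 h1 1), cap_left (contDiff_infty.1 h1 1) h2 h3, one_mul, capM,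
      integral_map (cap_meas _ _).aemeasurable h1.continuous.aestronglyMeasurable])
  filter_upwards [this] with x hx hxU
  have := hx (show x 0 * 1 + x 1 * 0 < 0 by linarith)
  rwa [abs_one] at this

lemma ntz_low {ntz : E2 → ℝ} (hntz : ∀ v : E2 → ℝ, ContDiff ℝ 1 v →
      ∫ x in Om, ⟪zf x, gradient v x⟫ = ∫ x, ntz x * v x ∂sg) :
    ∀ᵐ x ∂sg, x 1 < 0 → |ntz x| ≤ 1 := by
  have hU : IsOpen {p : E2 | p 0 * 0 + p 1 * 1 < 0} := isOpen_lt (by fun_prop) (by fun_prop)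
  have := density (ntz_integrable hntz) hU (capM 0 1) (capM_le (Or.inr ⟨rfl, rfl⟩)) (-1) (by
    intro v h1 h2 h3
    rw [← hntz v (contDiff_infty.1 h1 1), cap_low (contDiff_infty.1 h1 1) h2 h3, neg_one_mul, capM,
      integral_map (cap_meas _ _).aemeasurable h1.continuous.aestronglyMeasurable])
  filter_upwards [this] with x hx hxU
  have := hx (show x 0 * 0 + x 1 * 1 < 0 by linarith)
  rwa [abs_neg, abs_one] at this

/-- Nonuniqueness of level-set structure (Example 4.7). On the
domain `Ω` built from the quarter-disk `B(0,2) ∩ {x,y>0}` together with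
`B((2,1),√5) ∩ {x≤0}` and `B((1,2),√5) ∩ {y≤0}`, with `Γ = ∂Ω ∩ ({xy<0} ∪ {0})`
and `f = 1` for `x<0`, `f = 0` for `x>0`, every function
`u(r,θ) = 0` for `θ<0`, `g(θ)` for `θ∈[0,π/2]`, `1` for `θ>π/2` (with `g`
nondecreasing from `[0,π/2]` to `[0,1]`) satisfies the 1-Laplace conditions with
the vector field `z = (0,1)` for `θ<0`, `ê_θ` for `θ∈[0,π/2]`, `(−1,0)` for
`θ>π/2`. The measures `|Du|`, `(z,Du)`, the trace `Tu` and the normal trace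
`[z,ν]` are characterized by their defining properties, stated as hypotheses. -/
theorem fan_example_oneLaplace
    (Ω : Set E2)
    (hΩ : Ω = (Metric.ball (0 : E2) 2 ∩ {p : E2 | 0 < p 0 ∧ 0 < p 1}) ∪
      (Metric.ball (EuclideanSpace.single (0 : Fin 2) (2:ℝ) +
        EuclideanSpace.single (1 : Fin 2) (1:ℝ)) (Real.sqrt 5) ∩ {p : E2 | p 0 ≤ 0}) ∪
      (Metric.ball (EuclideanSpace.single (0 : Fin 2) (1:ℝ) +
        EuclideanSpace.single (1 : Fin 2) (2:ℝ)) (Real.sqrt 5) ∩ {p : E2 | p 1 ≤ 0}))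
    (Γ : Set E2) (hΓ : Γ = frontier Ω ∩ ({p : E2 | p 0 * p 1 < 0} ∪ {0}))
    (f : E2 → ℝ) (hf : f = fun p => if p 0 < 0 then (1:ℝ) else 0)
    (σ : Measure E2) (hσ : σ = (μH[1]).restrict (frontier Ω))
    (g : ℝ → ℝ) (hg : MonotoneOn g (Icc 0 (π/2)))
    (hg01 : ∀ y ∈ Icc (0:ℝ) (π/2), g y ∈ Icc (0:ℝ) 1)
    (u : E2 → ℝ) (hu : u = fun p => if theta p < 0 then 0
      else if theta p ≤ π/2 then g (theta p) else 1)
    (z : E2 → E2) (hz : z = fun p => if theta p < 0 then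
        EuclideanSpace.single (1 : Fin 2) (1:ℝ)
      else if theta p ≤ π/2 then ‖p‖⁻¹ • rot p
      else EuclideanSpace.single (0 : Fin 2) (-1:ℝ))
    -- the total variation measure |Du| on Ω, via the defining sup formula
    (TVμ : Measure E2) (hTVc : TVμ Ωᶜ = 0)
    (hTV : ∀ A : Set E2, IsOpen A → A ⊆ Ω →
      TVμ A = ⨆ w : {w : E2 → E2 // ContDiff ℝ 1 w ∧ HasCompactSupport w ∧
          tsupport w ⊆ A ∧ ∀ x, ‖w x‖ ≤ 1},
        ENNReal.ofReal (∫ x in A, u x * div2 w.1 x))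
    -- the Anzellotti pairing measure (z,Du), via its distributional definition
    (πz : Measure E2) (hπc : πz Ωᶜ = 0)
    (hπ : ∀ ϕ : E2 → ℝ, ContDiff ℝ (⊤ : ℕ∞) ϕ → HasCompactSupport ϕ → tsupport ϕ ⊆ Ω →
      ∫ x, ϕ x ∂πz = -∫ x in Ω, u x * ⟪z x, gradient ϕ x⟫)
    -- the BV boundary trace of u, via its a.e. averaged characterization
    (Tu : E2 → ℝ)
    (hTu : ∀ᵐ p ∂σ, Tendsto
      (fun r => (∫ y in Metric.ball p r ∩ Ω, |u y - Tu p|) /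
        (volume (Metric.ball p r ∩ Ω)).toReal) (nhdsWithin 0 (Ioi 0)) (nhds 0))
    -- the normal trace [z,ν], via Anzellotti's Green formula (div z = 0)
    (ntz : E2 → ℝ)
    (hntz : ∀ v : E2 → ℝ, ContDiff ℝ 1 v →
      ∫ x in Ω, ⟪z x, gradient v x⟫ = ∫ x, ntz x * v x ∂σ) :
    (∀ p ∈ Ω, ‖z p‖ ≤ 1) ∧
    DivFreeOn Ω z ∧
    (∀ A : Set E2, MeasurableSet A → A ⊆ Ω → πz A = TVμ A) ∧
    (∀ᵐ x ∂σ.restrict Γ, |ntz x| ≤ 1 ∧ ntz x * (f x - Tu x) = |f x - Tu x|) ∧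
    (∀ᵐ x ∂σ.restrict (frontier Ω \ Γ), ntz x = 0) := by
  have hΩ' : Ω = Om := hΩ.trans Om_eq
  clear hΩ
  subst hΩ'
  have hu' : u = uf g := hu
  have hz' : z = zf := hz
  have hσ' : σ = sg := hσ
  clear hu hz hσ
  subst hu' hz' hσ'
  refine ⟨fun p _ => zf_norm p, divfree_zf, ?_, ?_, ?_⟩
  · intro A hA hAO
    rw [ext_Om (fun B hB hBO => pi_open hg hg01 hπ hB hBO) hA hAO,
      ext_Om (fun B hB hBO => (hTV B hB hBO).trans (TV_open hg hg01 hB hBO)) hA hAO]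
  · have hΓm : MeasurableSet Γ := by
      rw [hΓ]
      refine isClosed_frontier.measurableSet.inter (MeasurableSet.union ?_ (measurableSet_singleton _))
      exact (isOpen_lt (by fun_prop) (by fun_prop)).measurableSet
    rw [ae_restrict_iff' hΓm]
    filter_upwards [ntz_left hntz, ntz_low hntz, hTu, sg_point 0] with p h1 h2 h3 h4 hp
    rw [hΓ] at hp
    obtain ⟨hpf, hp⟩ := hp
    have hp : p 0 * p 1 < 0 := hp.resolve_right h4
    have hpc : p ∈ closure Om := frontier_subset_closure hpf
    by_cases h0 : p 0 < 0
    · have hT : Tu p = 1 := trace_val hpc (V := {q : E2 | q 0 < 0})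
        (isOpen_lt (by fun_prop) (by fun_prop)) h0 (fun y hy hyO => uf_left g hyO hy) h3
      refine ⟨h1 h0, ?_⟩
      rw [hT, hf]
      simp [h0]
    · have hlow : p 1 < 0 := by
        by_contra hh
        exact absurd hp (not_lt.2 (mul_nonneg (not_lt.1 h0) (not_lt.1 hh)))
      have hT : Tu p = 0 := trace_val hpc (V := {q : E2 | q 1 < 0})
        (isOpen_lt (by fun_prop) (by fun_prop)) hlow (fun y hy _ => uf_low g hy) h3
      refine ⟨h2 hlow, ?_⟩
      rw [hT, hf]
      simp [h0]
  · have hΓm : MeasurableSet (frontier Om \ Γ) := by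
      rw [hΓ]
      refine isClosed_frontier.measurableSet.diff
        (isClosed_frontier.measurableSet.inter (MeasurableSet.union ?_ (measurableSet_singleton _)))
      exact (isOpen_lt (by fun_prop) (by fun_prop)).measurableSet
    rw [ae_restrict_iff' hΓm]
    filter_upwards [ntz_quarter hntz, sg_point 0, sg_point (vec 2 0), sg_point (vec 0 2)] with
      p h1 h2 h3 h4 hp
    obtain ⟨hpf, hp⟩ := hp
    rw [hΓ] at hp
    rcases off_gamma hpf (fun hh => hp ⟨hpf, Or.inl hh⟩) h2 with h | h | h
    · exact h1 h
    · exact absurd h h3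
    · exact absurd h h4
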